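/- arXiv:1601.01775 — 3 statements merged into one kernel-verified Lean document; each statement's English description precedes it below -/
import Mathlib

section
/- Let R be a standard graded domain which is a finitely generated ℤ-algebra of characteristic 0, and let I ⊂ R be a homogeneous ideal of finite colength, such that for almost all primes p the fiber R_p = R ⊗_ℤ ℤ/pℤ is a standard graded ring of dimension d which is geometrically integral and I_p = I ⊗_ℤ ℤ/pℤ ⊂ R_p is a homogeneous ideal of finite colength. Then there exists a constant C₁, given in terms of invariants of R and I, such that for all n ≥ 1 and almost all primes p, | ℓ(R_p/I_p^{[p^n]}) / p^{nd} − ℓ(R_p/I_p^{[p^{n+1}]}) / p^{(n+1)d} | ≤ C₁ / p^{n−d+2}. -/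
/-!
The error term comes from comparing `R_p` with a free module over its Frobenius image, by means of
data chosen once over `ℤ`.

Noether normalization of `R ⊗ ℚ`, with denominators cleared, gives a polynomial ring
`A = ℤ[x₁, …, x_s] ⊆ R` over which `R[1/N]` is generated by finitely many `ω₁, …, ω_e ∈ R`
(`exists_noether_data_of_field`). In characteristic zero `Frac R` is generated over `Frac A` by one
`θ ∈ R`, and there are a polynomial `F` with `F(θ) = 0` and a nonzero `c ∈ A` divisible by `F'(θ)` in
`A[θ]` (`exists_primitive_data`). Finally, since `R/I` is finite modulo almost all primes, each `xᵢ`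
satisfies a nonzero polynomial relation `fᵢ(xᵢ) ∈ I` (`exists_aeval_mem_of_finite`). For almost all
`p` these data reduce to data of the same kind over `𝔽_p`: `𝔽_p[x] → R_p` remains injective, by
Chevalley's theorem (`exists_bound_dvd_of_map_mem_span`), and it is finite, so that `s = d`.

Now let `B = R_p`, a domain, and `A_p = 𝔽_p[x₁, …, x_d]`. The additive map
`frobSum : B^(p^d) → B`, `(r_α) ↦ ∑ r_α^p x^α`, where `α` runs over `[0, p)^d`, is injective because
`Frac B` is separable over `Frac A_p` (`frobSum_injective`). Its image contains `A_p[θ^p]`. Applying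
Frobenius to the coefficients of `F` and using that the different of `A_p[θ^p]` multiplies integral
elements into `A_p[θ^p]` (Euler's trace formula), one finds `c^p B ⊆ A_p[θ^p]`
(`separable_and_pow_mul_mem_adjoin_pow`). Therefore `B^(p^d)` and `F_* B` embed into each other with
cokernels killed by `c`, and `p^d ℓ(B/J^[q])` differs from `ℓ(B/J^[pq])` by at most the larger of
`p^d ℓ(B/(c, J^[q]))` and `ℓ(B/(c^p, J^[pq]))` (`finrank_frobeniusPower_compare`). As `J^[q]`
contains the `fᵢ(xᵢ)^q`, counting monomials bounds these lengths by `e d m h^(d-1) p^d q^(d-1)`,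
where `m` and `h` bound the partial degrees of `c` and the degrees of the `fᵢ`
(`finrank_quotient_le_of_univariate`). Dividing by `p^((n+1)d)` with `q = p^n` bounds the difference
of the normalized lengths by a constant times `1/p^n`, hence by the same constant times
`1/p^(n-d+2)` because `d ≥ 2`.
-/

/-!
Statement 3 (Corollary 1.2(1)): for a standard graded domain `R` which is a
finitely generated `ℤ`-algebra of characteristic `0` and a homogeneous ideal
`I ⊂ R` of finite colength, such that for almost all primes `p` the fiber
`R_p = R ⊗ ℤ/pℤ` is a standard graded ring of dimension `d` which is
geometrically integral and `I_p ⊂ R_p` has finite colength, there is a constant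
`C₁` such that for all `n ≥ 1` and almost all primes `p`,
`|ℓ(R_p/I_p^{[pⁿ]})/p^{nd} − ℓ(R_p/I_p^{[p^{n+1}]})/p^{(n+1)d}| ≤ C₁/p^{n−d+2}`.
-/

/-- The Frobenius power `I^{[q]}`: the ideal generated by `q`-th powers of
elements of `I`. -/
def Ideal.frobeniusPower {R : Type*} [CommRing R] (I : Ideal R) (q : ℕ) : Ideal R :=
  Ideal.span ((fun x => x ^ q) '' (I : Set R))

/-- The fiber `R_p = R ⊗_ℤ ℤ/pℤ`, realized as `R ⧸ (p)`. -/
abbrev modPFiber (R : Type*) [CommRing R] (p : ℕ) : Type _ :=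
  R ⧸ (Ideal.span {(p : R)} : Ideal R)

/-- The image `I_p` of an ideal `I ⊆ R` in the fiber `R_p`. -/
def modPFiberIdeal {R : Type*} [CommRing R] (I : Ideal R) (p : ℕ) :
    Ideal (modPFiber R p) :=
  I.map (Ideal.Quotient.mk _)

/-- The colength `ℓ(R_p/J)` of an ideal `J` in the fiber `R_p`, i.e. its length
as a `ℤ/pℤ`-module (= its dimension as a `ℤ/pℤ`-vector space). -/
noncomputable def fiberColength {R : Type*} [CommRing R] (p : ℕ)
    [CharP (modPFiber R p) p] (J : Ideal (modPFiber R p)) : ℕ :=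
  letI : Algebra (ZMod p) (modPFiber R p) := ZMod.algebra _ p
  Module.finrank (ZMod p) (modPFiber R p ⧸ J)

/-- The fiber `R_p` is geometrically integral, i.e. `R_p ⊗ \bar𝔽_p` is a
domain. -/
def ModPFiberGeomIntegral (R : Type*) [CommRing R] (p : ℕ) [Fact p.Prime]
    [CharP (modPFiber R p) p] : Prop :=
  letI : Algebra (ZMod p) (modPFiber R p) := ZMod.algebra _ p
  IsDomain (TensorProduct (ZMod p) (AlgebraicClosure (ZMod p)) (modPFiber R p))

/-- The ideal `J ⊆ R_p` has finite colength. -/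
def ModPFiberFiniteColength {R : Type*} [CommRing R] (p : ℕ)
    [CharP (modPFiber R p) p] (J : Ideal (modPFiber R p)) : Prop :=
  letI : Algebra (ZMod p) (modPFiber R p) := ZMod.algebra _ p
  Module.Finite (ZMod p) (modPFiber R p ⧸ J)

/-! ### Ideals containing univariate polynomials -/

open MvPolynomial in
theorem finrank_restrictSupport_box {k : Type*} [Field k] (d H : ℕ) :
    Module.finrank k (restrictSupport k {a : Fin d →₀ ℕ | ∀ i, a i < H}) = H ^ d := by
  rw [Module.finrank_eq_nat_card_basis (basisRestrictSupport k _)]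
  let e : {a : Fin d →₀ ℕ | ∀ i, a i < H} ≃ (Fin d → Fin H) :=
    { toFun := fun a i => ⟨a.1 i, a.2 i⟩
      invFun := fun b => ⟨Finsupp.equivFunOnFinite.symm fun i => (b i : ℕ), fun i => (b i).2⟩
      left_inv := fun a => by ext; simp
      right_inv := fun b => by ext; simp }
  rw [Nat.card_congr e]
  simp

open MvPolynomial in
theorem mem_box_iff {k : Type*} [Field k] {d H : ℕ} (hH : 0 < H) (f : MvPolynomial (Fin d) k) :
    f ∈ restrictSupport k {a : Fin d →₀ ℕ | ∀ i, a i < H} ↔ ∀ i, f.degreeOf i < H := by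
  rw [mem_restrictSupport_iff]
  constructor
  · intro h i
    rw [degreeOf_lt_iff hH]
    exact fun m hm => h hm i
  · intro h m hm i
    exact (degreeOf_lt_iff hH).1 (h i) m hm

open MvPolynomial in
theorem degreeOf_aeval_X_le {k : Type*} [Field k] {d : ℕ} (i j : Fin d) (r : Polynomial k) :
    degreeOf j (Polynomial.aeval (X i : MvPolynomial (Fin d) k) r) ≤
      if i = j then r.natDegree else 0 := by
  rw [Polynomial.aeval_eq_sum_range]
  refine (degreeOf_sum_le _ _ _).trans (Finset.sup_le fun n hn => ?_)
  rw [smul_eq_C_mul]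
  refine (degreeOf_C_mul_le _ _ _).trans ((degreeOf_pow_le _ _ _).trans ?_)
  rw [degreeOf_X]
  split_ifs with h1 h2 h2
  · simpa [Nat.lt_succ_iff] using hn
  · exact absurd h1.symm h2
  · exact absurd h2.symm h1
  · simp

open MvPolynomial in
/-- Modulo univariate relations of degree at most `H` in each variable, every polynomial reduces
to one all of whose partial degrees are less than `H`. -/
theorem box_sup_ideal_eq_top {k : Type*} [Field k] {d H : ℕ} (hH : 0 < H)
    (g : Fin d → Polynomial k) (hg0 : ∀ i, g i ≠ 0) (hg : ∀ i, (g i).natDegree ≤ H)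
    (𝔞 : Ideal (MvPolynomial (Fin d) k))
    (h𝔞 : ∀ i, Polynomial.aeval (X i) (g i) ∈ 𝔞) :
    restrictSupport k {a : Fin d →₀ ℕ | ∀ i, a i < H} ⊔ 𝔞.restrictScalars k = ⊤ := by
  rw [eq_top_iff]
  intro f _
  induction f using MvPolynomial.induction_on' with
  | add f g hf hg => exact add_mem (hf trivial) (hg trivial)
  | monomial a c =>
    have hmon : monomial a c = c • ∏ i, (X i : MvPolynomial (Fin d) k) ^ a i := by
      rw [monomial_eq, smul_eq_C_mul, Finsupp.prod_fintype _ _ (by simp)]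
    rw [hmon]
    refine Submodule.smul_mem _ _ ?_
    let r : Fin d → Polynomial k := fun i => Polynomial.X ^ a i % g i
    have hr : ∀ i, (r i).natDegree < H := by
      intro i
      by_cases h0 : (g i).natDegree = 0
      · have : r i = 0 := by
          have hu : IsUnit (g i) := by
            rw [Polynomial.isUnit_iff_degree_eq_zero]
            exact (Polynomial.degree_eq_iff_natDegree_eq (hg0 i)).2 h0
          exact EuclideanDomain.mod_eq_zero.2 hu.dvd
        rw [this]; simpa
      · exact (Polynomial.natDegree_mod_lt _ h0).trans_le (hg i)
    have hcong : ∏ i, (X i : MvPolynomial (Fin d) k) ^ a i -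
        ∏ i, Polynomial.aeval (X i : MvPolynomial (Fin d) k) (r i) ∈ 𝔞 := by
      rw [← Ideal.Quotient.mk_eq_mk_iff_sub_mem, map_prod, map_prod]
      refine Finset.prod_congr rfl fun i _ => ?_
      rw [Ideal.Quotient.mk_eq_mk_iff_sub_mem]
      have hdiv := EuclideanDomain.div_add_mod (Polynomial.X ^ a i) (g i)
      have := congrArg (Polynomial.aeval (X i : MvPolynomial (Fin d) k)) hdiv
      rw [map_add, map_mul, map_pow, Polynomial.aeval_X] at this
      rw [← this, add_sub_cancel_right]
      exact 𝔞.mul_mem_right _ (h𝔞 i)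
    rw [← sub_add_cancel (∏ i, (X i : MvPolynomial (Fin d) k) ^ a i)
      (∏ i, Polynomial.aeval (X i : MvPolynomial (Fin d) k) (r i))]
    refine add_mem (Submodule.mem_sup_right hcong) (Submodule.mem_sup_left ?_)
    rw [mem_box_iff hH]
    intro j
    refine (degreeOf_prod_le j _ _).trans_lt ?_
    refine (Finset.sum_le_sum fun i _ => degreeOf_aeval_X_le i j (r i)).trans_lt ?_
    simpa using hr j

theorem pow_sub_pow_le_aux (H m d : ℕ) : H ^ d ≤ (H - m) ^ d + d * m * H ^ (d - 1) := by
  induction d with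
  | zero => simp
  | succ d ih =>
    rcases Nat.eq_zero_or_pos d with rfl | hd
    · simp; omega
    · have h1 : H * H ^ (d - 1) = H ^ d := by rw [← pow_succ', Nat.sub_add_cancel hd]
      have h3 : (H - m) ^ d ≤ H ^ d := Nat.pow_le_pow_left (Nat.sub_le _ _) _
      have h4 : H ≤ (H - m) + m := by omega
      calc H ^ (d + 1) = H * H ^ d := pow_succ' _ _
        _ ≤ H * ((H - m) ^ d + d * m * H ^ (d - 1)) := Nat.mul_le_mul_left _ ih
        _ = H * (H - m) ^ d + d * m * (H * H ^ (d - 1)) := by ring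
        _ = H * (H - m) ^ d + d * m * H ^ d := by rw [h1]
        _ ≤ ((H - m) + m) * (H - m) ^ d + d * m * H ^ d := by gcongr
        _ = (H - m) ^ (d + 1) + m * (H - m) ^ d + d * m * H ^ d := by ring
        _ ≤ (H - m) ^ (d + 1) + m * H ^ d + d * m * H ^ d := by gcongr
        _ = (H - m) ^ (d + 1) + (d + 1) * m * H ^ (d + 1 - 1) := by simp; ring

open MvPolynomial in
/-- Modulo univariate relations of degree at most `H`, the finite-dimensional space of polynomials of
partial degrees less than `H` surjects onto the quotient. -/
theorem finite_quotient_of_univariate {k : Type*} [Field k] {d H : ℕ} (hH : 0 < H)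
    (g : Fin d → Polynomial k) (hg0 : ∀ i, g i ≠ 0) (hg : ∀ i, (g i).natDegree ≤ H)
    (𝔞 : Ideal (MvPolynomial (Fin d) k))
    (h𝔞 : ∀ i, Polynomial.aeval (X i) (g i) ∈ 𝔞) :
    Function.Surjective ((𝔞.restrictScalars k).mkQ.comp
      (restrictSupport k {a : Fin d →₀ ℕ | ∀ i, a i < H}).subtype) ∧
    Module.Finite k (restrictSupport k {a : Fin d →₀ ℕ | ∀ i, a i < H}) := by
  constructor
  · intro y
    obtain ⟨f, rfl⟩ := Submodule.mkQ_surjective _ y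
    have hf : f ∈ (⊤ : Submodule k (MvPolynomial (Fin d) k)) := trivial
    rw [← box_sup_ideal_eq_top hH g hg0 hg 𝔞 h𝔞, Submodule.mem_sup] at hf
    obtain ⟨t, ht, u, hu, rfl⟩ := hf
    refine ⟨⟨t, ht⟩, ?_⟩
    simpa using hu
  · have : Finite {a : Fin d →₀ ℕ | ∀ i, a i < H} := by
      refine Set.Finite.subset (Set.finite_Iic (Finsupp.equivFunOnFinite.symm fun _ => H)) ?_
      intro a ha i
      simpa using (ha i).le
    exact Module.Finite.of_basis (basisRestrictSupport k _)

open MvPolynomial in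
/-- If an ideal of `k[x₁, …, x_d]` contains a nonzero `c` of partial degrees at most `m` and, for
each `i`, a univariate polynomial of degree at most `H` in `xᵢ`, then its colength is at most
`H ^ d - (H - m) ^ d ≤ d m H ^ (d - 1)`: polynomials of partial degrees less than `H` span the
quotient, and the multiples of `c` by polynomials of partial degrees less than `H - m` vanish. -/
theorem finrank_quotient_le_of_univariate {k : Type*} [Field k] {d H m : ℕ} (hH : 0 < H)
    (g : Fin d → Polynomial k) (hg0 : ∀ i, g i ≠ 0) (hg : ∀ i, (g i).natDegree ≤ H)
    (𝔞 : Ideal (MvPolynomial (Fin d) k))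
    (h𝔞 : ∀ i, Polynomial.aeval (X i) (g i) ∈ 𝔞)
    (c : MvPolynomial (Fin d) k) (hc0 : c ≠ 0) (hc : ∀ i, degreeOf i c ≤ m) (hc𝔞 : c ∈ 𝔞) :
    Module.Finite k (MvPolynomial (Fin d) k ⧸ 𝔞.restrictScalars k) ∧
    Module.finrank k (MvPolynomial (Fin d) k ⧸ 𝔞.restrictScalars k) ≤ d * m * H ^ (d - 1) := by
  obtain ⟨hsurj, hfin⟩ := finite_quotient_of_univariate hH g hg0 hg 𝔞 h𝔞
  set T := restrictSupport k {a : Fin d →₀ ℕ | ∀ i, a i < H}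
  set φ := (𝔞.restrictScalars k).mkQ.comp T.subtype
  refine ⟨Module.Finite.of_surjective φ hsurj, ?_⟩
  have hrn := φ.finrank_range_add_finrank_ker
  rw [LinearMap.range_eq_top.2 hsurj, finrank_top, finrank_restrictSupport_box] at hrn
  suffices hker : (H - m) ^ d ≤ Module.finrank k (LinearMap.ker φ) by
    have := pow_sub_pow_le_aux H m d
    omega
  rcases Nat.eq_zero_or_pos (H - m) with h0 | hpos
  · rcases Nat.eq_zero_or_pos d with rfl | hd
    · -- with no variables `c` is a unit, so the quotient is zero
      have hcu : IsUnit c := by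
        rw [eq_C_of_isEmpty c] at hc0 ⊢
        exact (isUnit_iff_ne_zero.2 (by simpa using hc0)).map C
      have h1 : 𝔞 = ⊤ := Ideal.eq_top_of_isUnit_mem _ hc𝔞 hcu
      have : Module.finrank k (MvPolynomial (Fin 0) k ⧸ 𝔞.restrictScalars k) = 0 := by
        subst h1
        rw [Submodule.restrictScalars_top]
        exact Module.finrank_zero_of_subsingleton
      rw [this] at hrn
      simp only [pow_zero] at hrn ⊢
      omega
    · rw [h0, zero_pow hd.ne']; exact Nat.zero_le _
  · rw [← finrank_restrictSupport_box (k := k) d (H - m)]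
    have hmem : ∀ t : restrictSupport k {a : Fin d →₀ ℕ | ∀ i, a i < H - m},
        (LinearMap.mulLeft k c) t ∈ T := by
      intro t
      rw [mem_box_iff hH]
      intro i
      have h1 := (mem_box_iff hpos _).1 t.2 i
      have h2 := degreeOf_mul_le i c t.1
      have h3 := hc i
      rw [LinearMap.mulLeft_apply]
      omega
    let ψ : restrictSupport k {a : Fin d →₀ ℕ | ∀ i, a i < H - m} →ₗ[k] LinearMap.ker φ :=
      LinearMap.codRestrict _ (LinearMap.codRestrict T
        ((LinearMap.mulLeft k c).comp (Submodule.subtype _)) hmem) (by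
          intro t
          simp only [φ, LinearMap.mem_ker, LinearMap.comp_apply, Submodule.mkQ_apply,
            Submodule.Quotient.mk_eq_zero]
          exact 𝔞.mul_mem_right _ hc𝔞)
    refine LinearMap.finrank_le_finrank_of_injective (f := ψ) ?_
    intro s t hst
    have : c * s.1 = c * t.1 :=
      congrArg (fun z : LinearMap.ker φ => ((z : T) : MvPolynomial (Fin d) k)) hst
    exact Subtype.ext (mul_left_cancel₀ hc0 this)

/-! ### Lengths of quotients -/

/-- If `B` is generated by `e` elements over `A`, then the colength of an ideal of `B` is at most `e`
times the colength of its contraction to `A`. -/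
theorem finrank_quotient_le_of_span {k A B : Type*} [Field k] [CommRing A] [CommRing B]
    [Algebra k A] [Algebra k B] [Algebra A B] [IsScalarTower k A B] {e : ℕ} (ω : Fin e → B)
    (hω : Submodule.span A (Set.range ω) = ⊤) (K : Ideal B)
    [Module.Finite k (A ⧸ (K.comap (algebraMap A B)).restrictScalars k)] :
    Module.Finite k (B ⧸ K) ∧
    Module.finrank k (B ⧸ K) ≤
      e * Module.finrank k (A ⧸ (K.comap (algebraMap A B)).restrictScalars k) := by
  let 𝔞 := (K.comap (algebraMap A B)).restrictScalars k
  let f : Fin e → (A ⧸ 𝔞) →ₗ[k] (B ⧸ K.restrictScalars k) := fun j =>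
    𝔞.liftQ ((K.restrictScalars k).mkQ.comp
      ((LinearMap.toSpanSingleton A B (ω j)).restrictScalars k)) (by
        intro a ha
        simp only [LinearMap.mem_ker, LinearMap.comp_apply, Submodule.mkQ_apply,
          Submodule.Quotient.mk_eq_zero, LinearMap.coe_restrictScalars,
          LinearMap.toSpanSingleton_apply, Submodule.restrictScalars_mem, Algebra.smul_def]
        exact K.mul_mem_right _ ha)
  let φ : (Fin e → A ⧸ 𝔞) →ₗ[k] (B ⧸ K.restrictScalars k) :=
    ∑ j, (f j).comp (LinearMap.proj j)
  have hφ : Function.Surjective φ := by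
    intro y
    obtain ⟨b, rfl⟩ := Submodule.mkQ_surjective _ y
    have hb : b ∈ Submodule.span A (Set.range ω) := hω ▸ trivial
    obtain ⟨a, rfl⟩ := (Submodule.mem_span_range_iff_exists_fun A).1 hb
    refine ⟨fun j => 𝔞.mkQ (a j), ?_⟩
    simp [φ, f, LinearMap.sum_apply]
  have e1 : (B ⧸ K.restrictScalars k) ≃ₗ[k] (B ⧸ K) :=
    Submodule.Quotient.restrictScalarsEquiv k K
  have hfin : Module.Finite k (B ⧸ K.restrictScalars k) := Module.Finite.of_surjective φ hφ
  refine ⟨Module.Finite.equiv e1, ?_⟩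
  rw [← e1.finrank_eq]
  refine (LinearMap.finrank_le_finrank_of_surjective hφ).trans ?_
  rw [Module.finrank_pi_fintype]
  simp [𝔞]

/-- If `Φ` induces a map `M/P → M'/P'` and `M'/K'` surjects onto the cokernel of that map, then
`dim M'/P' ≤ dim M/P + dim M'/K'`. -/
theorem finrank_quotient_le_add {k M M' : Type*} [Field k] [AddCommGroup M] [AddCommGroup M']
    [Module k M] [Module k M'] (Φ : M →ₗ[k] M') (P : Submodule k M) (P' K' : Submodule k M')
    (hP : P ≤ P'.comap Φ) (hK : K' ≤ LinearMap.range Φ ⊔ P')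
    [Module.Finite k (M ⧸ P)] [Module.Finite k (M' ⧸ P')] [Module.Finite k (M' ⧸ K')] :
    Module.finrank k (M' ⧸ P') ≤ Module.finrank k (M ⧸ P) + Module.finrank k (M' ⧸ K') := by
  let Φ' := P.mapQ P' Φ hP
  rw [← (LinearMap.range Φ').finrank_quotient_add_finrank, add_comm]
  refine add_le_add (LinearMap.finrank_range_le Φ') ?_
  let ψ : (M' ⧸ K') →ₗ[k] ((M' ⧸ P') ⧸ LinearMap.range Φ') :=
    K'.liftQ ((LinearMap.range Φ').mkQ.comp P'.mkQ) (by
      refine hK.trans (sup_le ?_ ?_)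
      · rintro _ ⟨m, rfl⟩
        simp only [LinearMap.mem_ker, LinearMap.comp_apply, Submodule.mkQ_apply,
          Submodule.Quotient.mk_eq_zero]
        exact ⟨P.mkQ m, by simp [Φ']⟩
      · intro m hm
        have : P'.mkQ m = 0 := by simpa using hm
        simp only [LinearMap.mem_ker, LinearMap.comp_apply, this, map_zero])
  refine LinearMap.finrank_le_finrank_of_surjective (f := ψ) ?_
  intro y
  obtain ⟨z, rfl⟩ := Submodule.mkQ_surjective _ y
  obtain ⟨m, rfl⟩ := Submodule.mkQ_surjective _ z
  exact ⟨K'.mkQ m, by simp [ψ]⟩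

/-! ### Frobenius and the monomials of small exponent -/

section CharP

variable {p : ℕ} [Fact p.Prime] {d : ℕ} {B : Type*} [CommRing B]

/-- The monomial `x^α` with exponents `αᵢ < p`, as an element of `B`. -/
noncomputable def boxMonomial (B : Type*) [CommRing B]
    [Algebra (MvPolynomial (Fin d) (ZMod p)) B] (α : Fin d → Fin p) : B :=
  algebraMap (MvPolynomial (Fin d) (ZMod p)) B
    (MvPolynomial.monomial (Finsupp.equivFunOnFinite.symm fun i => (α i : ℕ)) 1)

/-- The map `(r_α) ↦ ∑ r_α ^ p x^α` from a free module of rank `p ^ d` to `F_* B`, where `α` ranges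
over the exponents in `[0, p)^d`. -/
noncomputable def frobSum (p d : ℕ) [Fact p.Prime] (B : Type*) [CommRing B] [CharP B p]
    [Algebra (ZMod p) B] [Algebra (MvPolynomial (Fin d) (ZMod p)) B] :
    ((Fin d → Fin p) → B) →ₗ[ZMod p] B :=
  AddMonoidHom.toZModLinearMap p
    { toFun := fun r => ∑ α, r α ^ p * boxMonomial B α
      map_zero' := by
        have : p ≠ 0 := (Fact.out : p.Prime).ne_zero
        simp [this]
      map_add' := fun r s => by
        simp [← Finset.sum_add_distrib, add_pow_char, add_mul] }

theorem frobSum_apply [CharP B p] [Algebra (ZMod p) B]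
    [Algebra (MvPolynomial (Fin d) (ZMod p)) B] (r : (Fin d → Fin p) → B) :
    frobSum p d B r = ∑ α, r α ^ p * boxMonomial B α := rfl

theorem frobSum_smul [CharP B p] [Algebra (ZMod p) B]
    [Algebra (MvPolynomial (Fin d) (ZMod p)) B] (b : B) (r : (Fin d → Fin p) → B) :
    frobSum p d B (b • r) = b ^ p * frobSum p d B r := by
  simp [frobSum_apply, Finset.mul_sum, mul_pow, mul_assoc]

theorem pow_mem_frobeniusPower [CharP B p] {J : Ideal B} {q : ℕ} {r : B} (hr : r ∈ J.frobeniusPower q) :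
    r ^ p ∈ J.frobeniusPower (q * p) := by
  have : J.frobeniusPower q ≤ (J.frobeniusPower (q * p)).comap (frobenius B p) := by
    refine Ideal.span_le.2 ?_
    rintro _ ⟨x, hx, rfl⟩
    refine Ideal.subset_span ⟨x, hx, ?_⟩
    simp [frobenius_def, pow_mul]
  exact this hr

/-- Colength bound in a finite extension `B` of `𝔽_p[x₁, …, x_d]` for an ideal containing univariate
polynomials of degree at most `H` and a nonzero polynomial of partial degrees at most `m`. -/
theorem finite_and_finrank_le_of_mem [Algebra (ZMod p) B]
    [Algebra (MvPolynomial (Fin d) (ZMod p)) B]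
    [IsScalarTower (ZMod p) (MvPolynomial (Fin d) (ZMod p)) B] {e H m : ℕ} (hH : 0 < H) (ω : Fin e → B)
    (hω : Submodule.span (MvPolynomial (Fin d) (ZMod p)) (Set.range ω) = ⊤)
    (g : Fin d → Polynomial (ZMod p)) (hg0 : ∀ i, g i ≠ 0) (hg : ∀ i, (g i).natDegree ≤ H)
    (K : Ideal B)
    (hK : ∀ i, algebraMap (MvPolynomial (Fin d) (ZMod p)) B
      (Polynomial.aeval (MvPolynomial.X i) (g i)) ∈ K) :
    Module.Finite (ZMod p) (B ⧸ K) ∧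
    ∀ c : MvPolynomial (Fin d) (ZMod p), c ≠ 0 → (∀ i, c.degreeOf i ≤ m) →
      algebraMap _ B c ∈ K →
      Module.finrank (ZMod p) (B ⧸ K) ≤ e * (d * m * H ^ (d - 1)) := by
  obtain ⟨h1, h2⟩ := finite_quotient_of_univariate hH g hg0 hg
    (K.comap (algebraMap (MvPolynomial (Fin d) (ZMod p)) B)) hK
  have := Module.Finite.of_surjective _ h1
  obtain ⟨h3, h4⟩ := finrank_quotient_le_of_span (k := ZMod p) ω hω K
  refine ⟨h3, fun c hc0 hc hcK => h4.trans (Nat.mul_le_mul_left _ ?_)⟩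
  exact (finrank_quotient_le_of_univariate hH g hg0 hg _ hK c hc0 hc hcK).2

theorem finrank_quotient_pi {k : Type*} [Field k] [Algebra k B] {ι : Type*} [Fintype ι]
    [DecidableEq ι] (K : Ideal B) [Module.Finite k (B ⧸ K)] :
    Module.Finite k ((ι → B) ⧸ Submodule.pi Set.univ fun _ : ι => K.restrictScalars k) ∧
    Module.finrank k ((ι → B) ⧸ Submodule.pi Set.univ fun _ : ι => K.restrictScalars k) =
      Fintype.card ι * Module.finrank k (B ⧸ K) := by
  have e1 := Submodule.Quotient.restrictScalarsEquiv k K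
  have : Module.Finite k (B ⧸ K.restrictScalars k) := Module.Finite.equiv e1.symm
  have e2 := Submodule.quotientPi (R := k) fun _ : ι => K.restrictScalars k
  refine ⟨Module.Finite.equiv e2.symm, ?_⟩
  rw [e2.finrank_eq, Module.finrank_pi_fintype, ← e1.finrank_eq]
  simp

variable [CharP B p] [Algebra (ZMod p) B] [Algebra (MvPolynomial (Fin d) (ZMod p)) B]

/-- Comparison of consecutive Hilbert–Kunz lengths, given that `frobSum` is injective with cokernel
killed by `c` (acting on `F_* B` as `c ^ p`). The upper bound comes from the map `frobSum`, the
lower bound from the map `F_* B → B^(p^d)` obtained by dividing `c ^ p b` by `frobSum`. -/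
theorem finrank_frobeniusPower_compare
    [IsScalarTower (ZMod p) (MvPolynomial (Fin d) (ZMod p)) B]
    {e h m : ℕ} (hh : 0 < h) (ω : Fin e → B)
    (hω : Submodule.span (MvPolynomial (Fin d) (ZMod p)) (Set.range ω) = ⊤)
    (f : Fin d → Polynomial (ZMod p)) (hf0 : ∀ i, f i ≠ 0) (hf : ∀ i, (f i).natDegree ≤ h)
    (J : Ideal B)
    (hJ : ∀ i, algebraMap (MvPolynomial (Fin d) (ZMod p)) B
      (Polynomial.aeval (MvPolynomial.X i) (f i)) ∈ J)
    (c : MvPolynomial (Fin d) (ZMod p)) (hc0 : c ≠ 0) (hc : ∀ i, c.degreeOf i ≤ m)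
    (hinj : Function.Injective (frobSum p d B))
    (hsurj : ∀ b : B, algebraMap _ B c ^ p * b ∈ LinearMap.range (frobSum p d B))
    (q : ℕ) (hq : 0 < q) :
    p ^ d * Module.finrank (ZMod p) (B ⧸ J.frobeniusPower q) ≤
      Module.finrank (ZMod p) (B ⧸ J.frobeniusPower (q * p)) +
        p ^ d * (e * (d * m * (h * q) ^ (d - 1))) ∧
    Module.finrank (ZMod p) (B ⧸ J.frobeniusPower (q * p)) ≤
      p ^ d * Module.finrank (ZMod p) (B ⧸ J.frobeniusPower q) +
        e * (d * (p * m) * (h * (q * p)) ^ (d - 1)) := by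
  have hp : 0 < p := (Fact.out : p.Prime).pos
  have hpow : ∀ (s : ℕ) (i : Fin d), algebraMap (MvPolynomial (Fin d) (ZMod p)) B
      (Polynomial.aeval (MvPolynomial.X i) (f i ^ s)) ∈ J.frobeniusPower s := by
    intro s i
    rw [map_pow, map_pow]
    exact Ideal.subset_span ⟨_, hJ i, rfl⟩
  have hdeg : ∀ (s : ℕ) (i : Fin d), (f i ^ s).natDegree ≤ h * s := by
    intro s i
    rw [Polynomial.natDegree_pow, mul_comm]
    exact Nat.mul_le_mul_right _ (hf i)
  have hne : ∀ (s : ℕ) (i : Fin d), f i ^ s ≠ 0 := fun s i => pow_ne_zero _ (hf0 i)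
  have hfinite : ∀ (s : ℕ) (K : Ideal B), 0 < s → J.frobeniusPower s ≤ K →
      Module.Finite (ZMod p) (B ⧸ K) := fun s K hs hK =>
    (finite_and_finrank_le_of_mem (m := 0) (Nat.mul_pos hh hs) ω hω (fun i => f i ^ s) (hne s)
      (hdeg s) K (fun i => hK (hpow s i))).1
  have hqp : 0 < q * p := Nat.mul_pos hq hp
  have hfq := hfinite q _ hq le_rfl
  have hfqp := hfinite (q * p) _ hqp le_rfl
  have e1 := fun K : Ideal B => Submodule.Quotient.restrictScalarsEquiv (ZMod p) K
  have hfqp' : Module.Finite (ZMod p)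
      (B ⧸ (J.frobeniusPower (q * p)).restrictScalars (ZMod p)) :=
    Module.Finite.equiv (e1 _).symm
  have hcard : Fintype.card (Fin d → Fin p) = p ^ d := by simp
  obtain ⟨hpf, hpr⟩ := finrank_quotient_pi (k := ZMod p) (ι := Fin d → Fin p)
    (J.frobeniusPower q)
  rw [hcard] at hpr
  constructor
  · -- the map `b ↦ frobSum⁻¹ (c ^ p b)`
    let Ψ : B →ₗ[ZMod p] ((Fin d → Fin p) → B) :=
      (LinearEquiv.ofInjective _ hinj).symm.toLinearMap.comp
        ((LinearMap.mulLeft (ZMod p) (algebraMap _ B c ^ p)).codRestrict _ hsurj)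
    have hΨ : ∀ b, frobSum p d B (Ψ b) = algebraMap _ B c ^ p * b := by
      intro b
      have := LinearEquiv.apply_symm_apply (LinearEquiv.ofInjective _ hinj)
        ((LinearMap.mulLeft (ZMod p) (algebraMap _ B c ^ p)).codRestrict _ hsurj b)
      exact congrArg Subtype.val this
    let K : Ideal B := Ideal.span {algebraMap _ B c} ⊔ J.frobeniusPower q
    have hKf : Module.Finite (ZMod p) (B ⧸ K) := hfinite q K hq le_sup_right
    obtain ⟨hKpf, hKpr⟩ := finrank_quotient_pi (k := ZMod p) (ι := Fin d → Fin p) K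
    have key := finrank_quotient_le_add Ψ ((J.frobeniusPower (q * p)).restrictScalars (ZMod p))
      (Submodule.pi Set.univ fun _ => (J.frobeniusPower q).restrictScalars (ZMod p))
      (Submodule.pi Set.univ fun _ => K.restrictScalars (ZMod p))
      (by
        intro z hz
        refine Submodule.closure_induction (R := B)
          (p := fun z _ => z ∈ Submodule.comap Ψ (Submodule.pi Set.univ fun _ =>
            (J.frobeniusPower q).restrictScalars (ZMod p))) ?_ ?_ ?_ hz
        · exact zero_mem _
        · intro x y _ _ hx hy
          exact add_mem hx hy
        · rintro b _ ⟨x, hx, rfl⟩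
          have : Ψ (b • x ^ (q * p)) = x ^ q • Ψ b := by
            apply hinj
            rw [hΨ, frobSum_smul, hΨ, smul_eq_mul]
            ring
          intro α _
          rw [this]
          exact Ideal.mul_mem_right _ _ (Ideal.subset_span ⟨x, hx, rfl⟩))
      (by
        intro r hr
        have hr' : ∀ α, ∃ s t, t ∈ J.frobeniusPower q ∧ algebraMap _ B c * s + t = r α := by
          intro α
          obtain ⟨y, hy, t, ht, hyt⟩ := Submodule.mem_sup.1 (hr α trivial)
          obtain ⟨s, rfl⟩ := Ideal.mem_span_singleton'.1 hy
          exact ⟨s, t, ht, by rw [← hyt, mul_comm]⟩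
        choose s t ht hst using hr'
        have : r = Ψ (frobSum p d B s) + t := by
          have h1 : Ψ (frobSum p d B s) = algebraMap _ B c • s := by
            apply hinj
            rw [hΨ, frobSum_smul]
          rw [h1]
          ext α
          exact (hst α).symm
        rw [this]
        exact add_mem (Submodule.mem_sup_left ⟨_, rfl⟩)
          (Submodule.mem_sup_right fun α _ => ht α))
    rw [hpr, hKpr, (e1 _).finrank_eq, hcard] at key
    refine key.trans (Nat.add_le_add_left (Nat.mul_le_mul_left _ ?_) _)
    exact (finite_and_finrank_le_of_mem (m := m) (Nat.mul_pos hh hq) ω hω (fun i => f i ^ q) (hne q)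
      (hdeg q) K (fun i => Ideal.mem_sup_right (hpow q i))).2 c hc0 hc
      (Ideal.mem_sup_left (Ideal.mem_span_singleton_self _))
  · let K : Ideal B := Ideal.span {algebraMap _ B (c ^ p)} ⊔ J.frobeniusPower (q * p)
    have hKf : Module.Finite (ZMod p) (B ⧸ K) := hfinite (q * p) K hqp le_sup_right
    have hKf' : Module.Finite (ZMod p) (B ⧸ K.restrictScalars (ZMod p)) :=
      Module.Finite.equiv (e1 _).symm
    have key := finrank_quotient_le_add (frobSum p d B)
      (Submodule.pi Set.univ fun _ => (J.frobeniusPower q).restrictScalars (ZMod p))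
      ((J.frobeniusPower (q * p)).restrictScalars (ZMod p)) (K.restrictScalars (ZMod p))
      (by
        intro r hr
        change ∑ α, r α ^ p * boxMonomial B α ∈ J.frobeniusPower (q * p)
        refine Ideal.sum_mem _ fun α _ => Ideal.mul_mem_right _ _ ?_
        exact pow_mem_frobeniusPower (hr α trivial))
      (by
        intro b hb
        obtain ⟨y, hy, t, ht, rfl⟩ := Submodule.mem_sup.1 hb
        obtain ⟨s, rfl⟩ := Ideal.mem_span_singleton'.1 hy
        refine add_mem (Submodule.mem_sup_left ?_) (Submodule.mem_sup_right ht)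
        rw [mul_comm, map_pow]
        exact hsurj s)
    rw [hpr, (e1 _).finrank_eq, (e1 _).finrank_eq] at key
    refine key.trans (Nat.add_le_add_left ?_ _)
    exact (finite_and_finrank_le_of_mem (m := p * m) (Nat.mul_pos hh hqp) ω hω
      (fun i => f i ^ (q * p)) (hne _) (hdeg _) K (fun i => Ideal.mem_sup_right (hpow _ i))).2
      (c ^ p) (pow_ne_zero _ hc0)
      (fun i => (MvPolynomial.degreeOf_pow_le _ _ _).trans (Nat.mul_le_mul_left _ (hc i)))
      (Ideal.mem_sup_left (Ideal.mem_span_singleton_self _))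

/-! ### Image and kernel of the Frobenius sum -/

theorem frobSum_single (α : Fin d → Fin p) (b : B) :
    frobSum p d B (Pi.single α b) = b ^ p * boxMonomial B α := by
  have hp : p ≠ 0 := (Fact.out : p.Prime).ne_zero
  rw [frobSum_apply, Finset.sum_eq_single α]
  · simp
  · intro β _ hβ
    simp [Pi.single_eq_of_ne hβ, hp]
  · simp

theorem algebraMap_mul_pow_mem_range_frobSum (a : MvPolynomial (Fin d) (ZMod p)) (b : B) :
    algebraMap _ B a * b ^ p ∈ LinearMap.range (frobSum p d B) := by
  have hp : 0 < p := (Fact.out : p.Prime).pos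
  induction a using MvPolynomial.induction_on' with
  | add f g hf hg =>
    rw [map_add, add_mul]
    exact add_mem hf hg
  | monomial γ t =>
    -- split the exponent as `γ = p β + α` with `αᵢ < p`
    let α : Fin d → Fin p := fun i => ⟨γ i % p, Nat.mod_lt _ hp⟩
    let β : Fin d →₀ ℕ := Finsupp.equivFunOnFinite.symm fun i => γ i / p
    refine ⟨Pi.single α (algebraMap _ B (MvPolynomial.monomial β t) * b), ?_⟩
    rw [frobSum_single, mul_pow, boxMonomial, mul_right_comm, ← map_pow, ← map_mul]
    congr 2
    rw [MvPolynomial.monomial_pow, MvPolynomial.monomial_mul, mul_one, ZMod.pow_card]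
    have hγ : p • β + Finsupp.equivFunOnFinite.symm (fun i => (α i : ℕ)) = γ := by
      ext i
      simp [α, β, Nat.div_add_mod]
    rw [hγ]

theorem aeval_pow_mem_range_frobSum (θ : B) (P : Polynomial (MvPolynomial (Fin d) (ZMod p))) :
    Polynomial.aeval (θ ^ p) P ∈ LinearMap.range (frobSum p d B) := by
  rw [Polynomial.aeval_eq_sum_range]
  refine Submodule.sum_mem _ fun i _ => ?_
  rw [Algebra.smul_def, ← pow_mul, mul_comm p i, pow_mul]
  exact algebraMap_mul_pow_mem_range_frobSum _ _

/-- The monomials `x^α`, `α ∈ [0, p)^d`, are independent over the `p`-th powers: the terms of the sum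
have pairwise different exponents modulo `p`. -/
theorem eq_zero_of_sum_pow_mul_monomial_eq_zero
    (a : (Fin d → Fin p) → MvPolynomial (Fin d) (ZMod p))
    (h : ∑ α, a α ^ p * MvPolynomial.monomial
      (Finsupp.equivFunOnFinite.symm fun i => (α i : ℕ)) 1 = 0) (α : Fin d → Fin p) :
    a α = 0 := by
  have hp : 0 < p := (Fact.out : p.Prime).pos
  ext β
  have hc := congrArg (MvPolynomial.coeff
    (p • β + Finsupp.equivFunOnFinite.symm fun i => (α i : ℕ))) h
  rw [MvPolynomial.coeff_sum, Finset.sum_eq_single α] at hc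
  · rw [MvPolynomial.coeff_mul_monomial, ← MvPolynomial.expand_zmod,
      MvPolynomial.coeff_expand_smul _ hp.ne'] at hc
    simpa using hc
  · intro α' _ hne
    rw [MvPolynomial.coeff_mul_monomial']
    split_ifs with hle
    · obtain ⟨i, hi⟩ := Function.ne_iff.1 hne
      rw [← MvPolynomial.expand_zmod, MvPolynomial.coeff_expand_of_not_dvd (i := i), zero_mul]
      intro hdvd
      have h1 := hle i
      simp only [Finsupp.coe_tsub, Finsupp.coe_add, Finsupp.coe_smul, Pi.sub_apply, Pi.add_apply,
        Pi.smul_apply, smul_eq_mul, Finsupp.equivFunOnFinite_symm_apply_apply] at hdvd h1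
      have h2 : (α' i : ℕ) ≡ p * β i + α i [MOD p] := (Nat.modEq_iff_dvd' h1).2 hdvd
      have h3 : (α' i : ℕ) ≡ α i [MOD p] := by
        simpa [Nat.ModEq] using h2
      exact hi (Fin.ext (Nat.ModEq.eq_of_lt_of_lt h3 (α' i).2 (α i).2))
    · rfl
  · simp

/-- Injectivity of `frobSum` when `Frac B` is separable over `Frac A`, `A = 𝔽_p[x₁, …, x_d]`:
the `p`-th powers of a basis of `Frac B` over `Frac A` are again independent, which reduces the
claim to the independence of the `x^α` over `A ^ p`. -/
theorem frobSum_injective {E L : Type*} [Field E] [Field L]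
    [Algebra (MvPolynomial (Fin d) (ZMod p)) E] [IsFractionRing (MvPolynomial (Fin d) (ZMod p)) E]
    [Algebra B L] [FaithfulSMul B L] [Algebra (MvPolynomial (Fin d) (ZMod p)) L]
    [IsScalarTower (MvPolynomial (Fin d) (ZMod p)) B L] [Algebra E L]
    [IsScalarTower (MvPolynomial (Fin d) (ZMod p)) E L]
    [FiniteDimensional E L] [Algebra.IsSeparable E L] :
    Function.Injective (frobSum p d B) := by
  rw [injective_iff_map_eq_zero]
  intro r hr
  have hp : p ≠ 0 := (Fact.out : p.Prime).ne_zero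
  let A := MvPolynomial (Fin d) (ZMod p)
  have hinjB : Function.Injective (algebraMap B L) := FaithfulSMul.algebraMap_injective B L
  have hEchar : CharP E p := charP_of_injective_algebraMap (IsFractionRing.injective A E) p
  have hLchar : CharP L p := charP_of_injective_algebraMap hinjB p
  have : ExpChar E p := ExpChar.prime Fact.out
  have : ExpChar L p := ExpChar.prime Fact.out
  let b := Module.finBasis E L
  have hb : LinearIndependent E fun i => b i ^ p := by
    simpa using b.linearIndependent.map_pow_expChar_pow_of_isSeparable p 1
  let mon : (Fin d → Fin p) → A := fun α =>
    MvPolynomial.monomial (Finsupp.equivFunOnFinite.symm fun i => (α i : ℕ)) 1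
  -- coordinates of the `r α` in the basis `b`
  let a : (Fin d → Fin p) → Fin (Module.finrank E L) → E := fun α i => b.repr (algebraMap B L (r α)) i
  have ha : ∀ α, algebraMap B L (r α) ^ p = ∑ i, (a α i) ^ p • b i ^ p := by
    intro α
    conv_lhs => rw [← b.sum_repr (algebraMap B L (r α))]
    rw [sum_pow_char]
    simp [a, smul_pow]
  have hr' : ∑ i, (∑ α, (a α i) ^ p * algebraMap A E (mon α)) • b i ^ p = 0 := by
    have h0 := congrArg (algebraMap B L) hr
    rw [frobSum_apply, map_sum, map_zero] at h0
    rw [← h0]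
    simp_rw [Finset.sum_smul]
    rw [Finset.sum_comm]
    refine Finset.sum_congr rfl fun α _ => ?_
    rw [map_mul, map_pow, ha, Finset.sum_mul]
    refine Finset.sum_congr rfl fun i _ => ?_
    rw [boxMonomial, ← IsScalarTower.algebraMap_apply A B L, IsScalarTower.algebraMap_apply A E L,
      mul_smul, Algebra.smul_def, Algebra.smul_def, Algebra.smul_def]
    ring
  have hzero := Fintype.linearIndependent_iff.1 hb _ hr'
  have ha0 : ∀ i α, a α i = 0 := by
    intro i
    obtain ⟨s, hs⟩ := IsLocalization.exist_integer_multiples (nonZeroDivisors A) Finset.univ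
      (fun α => a α i)
    have hs' : ∀ α, ∃ t : A, algebraMap A E t = (s : A) • a α i := fun α =>
      hs α (Finset.mem_univ _)
    choose t ht using hs'
    have hs0 : algebraMap A E s ≠ 0 :=
      IsFractionRing.to_map_ne_zero_of_mem_nonZeroDivisors s.2
    have ht0 : ∀ α, t α = 0 := by
      refine eq_zero_of_sum_pow_mul_monomial_eq_zero t ?_
      apply IsFractionRing.injective A E
      rw [map_sum, map_zero]
      have h1 := congrArg (fun z => algebraMap A E s ^ p * z) (hzero i)
      simp only [mul_zero, Finset.mul_sum] at h1
      rw [← h1]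
      refine Finset.sum_congr rfl fun α _ => ?_
      rw [map_mul, map_pow, ht, Algebra.smul_def]
      ring
    intro α
    have h2 := ht α
    rw [ht0 α, map_zero, Algebra.smul_def] at h2
    exact (mul_eq_zero.1 h2.symm).resolve_left hs0
  ext α
  apply hinjB
  have h3 : b.repr (algebraMap B L (r α)) = 0 := by
    ext i
    exact ha0 i α
  rw [Pi.zero_apply, map_zero]
  exact b.repr.map_eq_zero_iff.1 h3

end CharP

/-! ### The different -/

open Polynomial in
/-- Over an integrally closed base, the different of `A[u]` multiplies integral elements into
`A[u]`. -/
theorem aeval_derivative_minpoly_mul_mem_adjoin {A E L : Type*} [CommRing A] [IsDomain A]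
    [IsIntegrallyClosed A] [Field E] [Field L] [Algebra A E] [IsFractionRing A E] [Algebra A L]
    [Algebra E L] [IsScalarTower A E L] [FiniteDimensional E L] [Algebra.IsSeparable E L]
    (u : L) (hu : IsIntegral A u) (hgen : Algebra.adjoin E {u} = ⊤) (z : L)
    (hz : IsIntegral A z) :
    aeval u (derivative (minpoly E u)) * z ∈ Algebra.adjoin A {u} := by
  have hz' : z ∈ (Algebra.traceForm E L).dualSubmodule
      (Subalgebra.toSubmodule (Algebra.adjoin A {u})) := by
    rw [LinearMap.BilinForm.mem_dualSubmodule]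
    intro y hy
    rw [Submodule.mem_one, Algebra.traceForm_apply]
    have hy' : IsIntegral A y := (Algebra.IsIntegral.adjoin (by simpa using hu)).isIntegral
      (⟨y, hy⟩ : Algebra.adjoin A {u}) |>.map (Algebra.adjoin A {u}).val
    exact IsIntegrallyClosed.isIntegral_iff.1 (Algebra.isIntegral_trace (hz.mul hy'))
  rw [traceForm_dualSubmodule_adjoin A E hgen hu] at hz'
  have hne : aeval u (derivative (minpoly E u)) ≠ 0 :=
    (Algebra.IsSeparable.isSeparable E u).aeval_derivative_ne_zero (minpoly.aeval _ _)
  obtain ⟨y, hy, rfl⟩ := hz'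
  simpa [hne] using hy

open Polynomial IntermediateField in
/-- Let `A` be an integrally closed domain of characteristic `p` and `B` a domain integral over `A`,
birational to `A[θ]`, with `c = V(θ) F'(θ)` for some `F` vanishing at `θ`. Then `Frac B` is
separable over `Frac A`, and `c ^ p` multiplies `B` into `A[θ ^ p]`: indeed `c ^ p` is a multiple of
the derivative at `θ ^ p` of the polynomial obtained from `F` by raising its coefficients to the
`p`-th power. -/
theorem separable_and_pow_mul_mem_adjoin_pow {A B : Type*} [CommRing A] [IsDomain A]
    [IsIntegrallyClosed A] [CommRing B] [IsDomain B] [Algebra A B] [Algebra.IsIntegral A B]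
    (p : ℕ) [Fact p.Prime] [CharP A p] (E L : Type*) [Field E] [Field L] [Algebra A E]
    [IsFractionRing A E] [Algebra B L] [IsFractionRing B L] [Algebra A L] [IsScalarTower A B L]
    [Algebra E L] [IsScalarTower A E L]
    (θ : B) (F V : A[X]) (c : A) (hc : c ≠ 0) (hF : aeval θ F = 0)
    (hV : algebraMap A B c = aeval θ V * aeval θ (derivative F))
    (hθ : ∀ b : B, ∃ c₂ : A, c₂ ≠ 0 ∧ ∃ P : A[X], algebraMap A B c₂ * b = aeval θ P) :
    FiniteDimensional E L ∧ Algebra.IsSeparable E L ∧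
      ∀ b : B, ∃ P : A[X], algebraMap A B c ^ p * b = aeval (θ ^ p) P := by
  have hinjB : Function.Injective (algebraMap B L) := IsFractionRing.injective B L
  have hinjE : Function.Injective (algebraMap A E) := IsFractionRing.injective A E
  have hinjAL : Function.Injective (algebraMap A L) := by
    rw [IsScalarTower.algebraMap_eq A E L]
    exact (algebraMap E L).injective.comp hinjE
  have : FaithfulSMul A L := (faithfulSMul_iff_algebraMap_injective A L).2 hinjAL
  have : CharP E p := charP_of_injective_algebraMap hinjE p
  have : CharP L p := charP_of_injective_algebraMap hinjAL p
  have : ExpChar E p := ExpChar.prime Fact.out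
  set t : L := algebraMap B L θ with ht
  have htint : IsIntegral A t := (Algebra.IsIntegral.isIntegral θ).map (IsScalarTower.toAlgHom A B L)
  have haev : ∀ (b : B) (P : A[X]), algebraMap B L (aeval b P) = aeval (algebraMap B L b) P :=
    fun b P => (Polynomial.aeval_algebraMap_apply L b P).symm
  have hFt : aeval t F = 0 := by rw [ht, ← haev, hF, map_zero]
  have hVt : algebraMap A L c = aeval t V * aeval t (derivative F) := by
    rw [ht, ← haev, ← haev, ← map_mul, ← hV, ← IsScalarTower.algebraMap_apply]
  have hcL : algebraMap A L c ≠ 0 := by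
    rw [Ne, map_eq_zero_iff _ hinjAL]
    exact hc
  -- `t` is separable over `E`
  have htsep : IsSeparable E t := by
    obtain ⟨k, hk⟩ := minpoly.isIntegrallyClosed_dvd htint hFt
    rw [IsSeparable, Polynomial.separable_iff_derivative_ne_zero
      (minpoly.irreducible htint.tower_top), minpoly.isIntegrallyClosed_eq_field_fractions' E htint]
    intro h0
    apply hcL
    have h1 : aeval t (derivative (minpoly A t)) = 0 := by
      rw [derivative_map] at h0
      rw [← Polynomial.aeval_map_algebraMap E, h0, map_zero]
    rw [hVt, hk, derivative_mul, map_add, map_mul, map_mul, minpoly.aeval, h1]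
    simp
  have htop : IntermediateField.adjoin E {t} = ⊤ := by
    rw [eq_top_iff]
    intro z _
    have hB : ∀ b : B, algebraMap B L b ∈ IntermediateField.adjoin E {t} := by
      intro b
      obtain ⟨c₂, hc₂, P, hP⟩ := hθ b
      have h1 : algebraMap A L c₂ * algebraMap B L b = aeval t P := by
        rw [ht, ← haev, ← hP, map_mul, ← IsScalarTower.algebraMap_apply]
      have hc₂L : algebraMap A L c₂ ≠ 0 := by
        rw [Ne, map_eq_zero_iff _ hinjAL]
        exact hc₂
      have h2 : algebraMap B L b = (algebraMap A L c₂)⁻¹ * aeval t P := by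
        rw [← h1, inv_mul_cancel_left₀ hc₂L]
      rw [h2, IsScalarTower.algebraMap_apply A E L, ← Polynomial.aeval_map_algebraMap E]
      refine mul_mem (inv_mem (IntermediateField.algebraMap_mem _ _)) ?_
      exact algebra_adjoin_le_adjoin _ _ (aeval_mem_adjoin_singleton _ _)
    obtain ⟨x, y, _, rfl⟩ := IsFractionRing.div_surjective (A := B) z
    exact div_mem (hB x) (hB y)
  have hfd : FiniteDimensional E L := by
    have := IntermediateField.adjoin.finiteDimensional (K := E) (x := t) htint.tower_top
    rw [htop] at this
    exact Module.Finite.equiv (IntermediateField.topEquiv (F := E) (E := L)).toLinearEquiv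
  have hsep : Algebra.IsSeparable E L := by
    have := (isSeparable_adjoin_simple_iff_isSeparable E L).2 htsep
    rw [htop] at this
    exact AlgEquiv.Algebra.isSeparable (IntermediateField.topEquiv (F := E) (E := L))
  refine ⟨hfd, hsep, fun b => ?_⟩
  -- `u = t ^ p` generates as well
  have huint : IsIntegral A (t ^ p) := htint.pow p
  have hutop : Algebra.adjoin E {t ^ p} = ⊤ := by
    have h1 := adjoin_simple_eq_adjoin_pow_expChar_of_isSeparable E L htsep p
    rw [htop] at h1
    rw [← adjoin_simple_toSubalgebra_of_isAlgebraic huint.tower_top.isAlgebraic, ← h1, top_toSubalgebra]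
  have hfrob : ∀ P : A[X], aeval (t ^ p) (P.map (frobenius A p)) = (aeval t P) ^ p := by
    intro P
    rw [aeval_def, eval₂_map, aeval_def, ← frobenius_def, ← frobenius_def, hom_eval₂]
    congr 1
    ext a
    simp [frobenius_def]
  obtain ⟨k, hk⟩ := minpoly.isIntegrallyClosed_dvd huint
    (p := F.map (frobenius A p)) (by rw [hfrob, hFt, zero_pow (Fact.out : p.Prime).ne_zero])
  have hcp : algebraMap A L c ^ p = aeval (t ^ p) (V.map (frobenius A p)) * aeval (t ^ p) k *
      aeval (t ^ p) (derivative (minpoly E (t ^ p))) := by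
    rw [hVt, mul_pow, ← hfrob, ← hfrob, ← derivative_map, hk, derivative_mul,
      minpoly.isIntegrallyClosed_eq_field_fractions' E huint, derivative_map,
      Polynomial.aeval_map_algebraMap]
    simp only [map_add, map_mul, minpoly.aeval]
    ring
  have hmem := aeval_derivative_minpoly_mul_mem_adjoin (A := A) (E := E) (t ^ p) huint hutop
    (algebraMap B L b) ((Algebra.IsIntegral.isIntegral b).map (IsScalarTower.toAlgHom A B L))
  have hmem' : algebraMap A L c ^ p * algebraMap B L b ∈ Algebra.adjoin A {t ^ p} := by
    rw [hcp, mul_assoc]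
    exact mul_mem (mul_mem (aeval_mem_adjoin_singleton _ _) (aeval_mem_adjoin_singleton _ _)) hmem
  rw [Algebra.adjoin_singleton_eq_range_aeval] at hmem'
  obtain ⟨P, hP⟩ := hmem'
  refine ⟨P, hinjB ?_⟩
  rw [haev, map_mul, map_pow, map_pow, ← IsScalarTower.algebraMap_apply]
  exact hP.symm

/-! ### The estimate in characteristic p -/

/-- The characteristic `p` estimate: the error of the comparison between the colengths of `J^[q]` and
`J^[pq]` is controlled by the data `e, d, m, h` only. -/
theorem abs_finrank_frobeniusPower_sub_le {p : ℕ} [Fact p.Prime] {d : ℕ} (hd : 0 < d)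
    {B : Type*} [CommRing B] [IsDomain B] [CharP B p] [Algebra (ZMod p) B]
    [Algebra (MvPolynomial (Fin d) (ZMod p)) B]
    [IsScalarTower (ZMod p) (MvPolynomial (Fin d) (ZMod p)) B]
    (hAB : Function.Injective (algebraMap (MvPolynomial (Fin d) (ZMod p)) B))
    {e h m : ℕ} (hh : 0 < h) (ω : Fin e → B)
    (hω : Submodule.span (MvPolynomial (Fin d) (ZMod p)) (Set.range ω) = ⊤)
    (f : Fin d → Polynomial (ZMod p)) (hf0 : ∀ i, f i ≠ 0) (hf : ∀ i, (f i).natDegree ≤ h)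
    (J : Ideal B)
    (hJ : ∀ i, algebraMap (MvPolynomial (Fin d) (ZMod p)) B
      (Polynomial.aeval (MvPolynomial.X i) (f i)) ∈ J)
    (c : MvPolynomial (Fin d) (ZMod p)) (hc0 : c ≠ 0) (hc : ∀ i, c.degreeOf i ≤ m)
    (θ : B) (F V : Polynomial (MvPolynomial (Fin d) (ZMod p)))
    (hF : Polynomial.aeval θ F = 0)
    (hV : algebraMap _ B c = Polynomial.aeval θ V * Polynomial.aeval θ F.derivative)
    (c₂ : MvPolynomial (Fin d) (ZMod p)) (hc₂ : c₂ ≠ 0)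
    (P : Fin e → Polynomial (MvPolynomial (Fin d) (ZMod p)))
    (hP : ∀ j, algebraMap _ B c₂ * ω j = Polynomial.aeval θ (P j))
    (q : ℕ) (hq : 0 < q) :
    |(p : ℝ) ^ d * Module.finrank (ZMod p) (B ⧸ J.frobeniusPower q) -
      Module.finrank (ZMod p) (B ⧸ J.frobeniusPower (q * p))| ≤
      (e * d * m * h ^ (d - 1) : ℕ) * (p : ℝ) ^ d * (q : ℝ) ^ (d - 1) := by
  let A := MvPolynomial (Fin d) (ZMod p)
  let E := FractionRing A
  let L := FractionRing B
  have : FaithfulSMul A B := (faithfulSMul_iff_algebraMap_injective A B).2 hAB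
  have hfin : Module.Finite A B := ⟨hω ▸ Submodule.fg_span (Set.finite_range ω)⟩
  have : FaithfulSMul A L := by
    rw [faithfulSMul_iff_algebraMap_injective, IsScalarTower.algebraMap_eq A B L]
    exact (IsFractionRing.injective B L).comp hAB
  let _ : Algebra E L := FractionRing.liftAlgebra A L
  have : IsScalarTower A E L := FractionRing.isScalarTower_liftAlgebra A L
  obtain ⟨hfd, hsep, hadj⟩ := separable_and_pow_mul_mem_adjoin_pow (A := A) (B := B) p E L θ F V c hc0
    hF hV (by
      intro b
      have hb : b ∈ Submodule.span A (Set.range ω) := hω ▸ trivial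
      obtain ⟨a, rfl⟩ := (Submodule.mem_span_range_iff_exists_fun A).1 hb
      refine ⟨c₂, hc₂, ∑ j, Polynomial.C (a j) * P j, ?_⟩
      rw [map_sum, Finset.mul_sum]
      refine Finset.sum_congr rfl fun j _ => ?_
      rw [map_mul, Polynomial.aeval_C, ← hP, Algebra.smul_def]
      ring)
  have hinj : Function.Injective (frobSum p d B) := frobSum_injective (E := E) (L := L)
  obtain ⟨h1, h2⟩ := finrank_frobeniusPower_compare hh ω hω f hf0 hf J hJ c hc0 hc hinj
    (fun b => by
      obtain ⟨Q, hQ⟩ := hadj b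
      rw [hQ]
      exact aeval_pow_mem_range_frobSum θ Q) q hq
  obtain ⟨k, rfl⟩ : ∃ k, d = k + 1 := ⟨d - 1, by omega⟩
  simp only [Nat.add_sub_cancel] at h1 h2 ⊢
  have h1' := (Nat.cast_le (α := ℝ)).2 h1
  have h2' := (Nat.cast_le (α := ℝ)).2 h2
  push_cast at h1' h2' ⊢
  rw [abs_le]
  constructor
  · ring_nf at h1' h2' ⊢
    linarith
  · ring_nf at h1' h2' ⊢
    linarith

/-! ### Reduction of injective maps modulo almost all primes -/

/-- An injective integral ring extension preserves the Krull dimension. -/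
theorem ringKrullDim_eq_of_isIntegral_of_injective {A B : Type*} [CommRing A] [CommRing B]
    [Algebra A B] [Algebra.IsIntegral A B] (hAB : Function.Injective (algebraMap A B)) :
    ringKrullDim B = ringKrullDim A := by
  apply le_antisymm
  · refine Order.krullDim_le_of_strictMono (PrimeSpectrum.comap (algebraMap A B)) fun P Q hPQ => ?_
    have hlt : P.asIdeal < Q.asIdeal := hPQ
    obtain ⟨x, hxQ, hxP⟩ := SetLike.exists_of_lt hlt
    exact Ideal.comap_lt_comap_of_integral_mem_sdiff hlt.le ⟨hxQ, hxP⟩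
      (Algebra.IsIntegral.isIntegral x)
  · refine iSup_le fun l => ?_
    obtain ⟨Q, -, hQ, hQl⟩ := Ideal.exists_ideal_over_prime_of_isIntegral (S := B)
      (RelSeries.head l).asIdeal ⊥ (by
        rw [Ideal.comap_bot_of_injective _ hAB]
        exact bot_le)
    have : Q.LiesOver (RelSeries.head l).asIdeal := ⟨hQl.symm⟩
    obtain ⟨L, hL, -⟩ := Ideal.exists_ltSeries_of_hasGoingUp l Q
    rw [← hL]
    exact le_iSup (fun L : LTSeries (PrimeSpectrum B) => ((L.length : ℕ) : WithBot ℕ∞)) L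

/-- Let `A` be a Noetherian domain in which the rational primes are prime elements and only finitely
many of them divide a given nonzero element. An injective map `A → S` of finite type stays injective modulo
almost all primes, because by Chevalley's theorem the image of `Spec S` contains a nonempty open
subset of `Spec A`. -/
theorem exists_bound_dvd_of_map_mem_span {A S : Type*} [CommRing A] [IsDomain A] [IsNoetherianRing A]
    [CommRing S] (hprime : ∀ p : ℕ, p.Prime → Prime (p : A))
    (hdvd : ∀ g : A, g ≠ 0 → ∃ N : ℕ, ∀ p : ℕ, p.Prime → N ≤ p → ¬ (p : A) ∣ g)
    (φ : A →+* S) (hφ : Function.Injective φ) (hft : φ.FiniteType) :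
    ∃ N : ℕ, ∀ p : ℕ, p.Prime → N ≤ p → ∀ a : A, φ a ∈ Ideal.span {(p : S)} → (p : A) ∣ a := by
  have hcons := PrimeSpectrum.isConstructible_range_comap
    (RingHom.FinitePresentation.of_finiteType.1 hft)
  obtain ⟨T, hT⟩ := PrimeSpectrum.exists_constructibleSetData_iff.2 hcons
  obtain ⟨Q₀, hQ₀, hQ₀b⟩ := Ideal.exists_comap_eq_of_mem_minimalPrimes_of_injective hφ (⊥ : Ideal A)
    (by rw [IsDomain.minimalPrimes_eq_singleton_bot]; rfl)
  have hbot : (⊥ : PrimeSpectrum A) ∈ T.toSet := by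
    rw [hT]
    exact ⟨⟨Q₀, hQ₀⟩, PrimeSpectrum.ext hQ₀b⟩
  rw [PrimeSpectrum.ConstructibleSetData.toSet, Set.mem_iUnion₂] at hbot
  obtain ⟨C, hC, hCg, hCf⟩ := hbot
  have hg0 : ∀ i, C.g i = 0 := fun i => hCg ⟨i, rfl⟩
  have hf0 : C.f ≠ 0 := fun h => hCf (by simp [h])
  obtain ⟨N, hN⟩ := hdvd C.f hf0
  refine ⟨N, fun p hp hpN a ha => ?_⟩
  have hP : (Ideal.span {(p : A)}).IsPrime :=
    (Ideal.span_singleton_prime (hprime p hp).ne_zero).2 (hprime p hp)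
  have hmem : (⟨Ideal.span {(p : A)}, hP⟩ : PrimeSpectrum A) ∈ T.toSet := by
    rw [PrimeSpectrum.ConstructibleSetData.toSet, Set.mem_iUnion₂]
    refine ⟨C, hC, ?_, ?_⟩
    · rintro _ ⟨i, rfl⟩
      rw [hg0]
      exact zero_mem _
    · intro h
      exact hN p hp hpN (Ideal.mem_span_singleton.1 (h rfl))
  rw [hT] at hmem
  obtain ⟨Q, hQ⟩ := hmem
  have hQ' : Q.asIdeal.comap φ = Ideal.span {(p : A)} := congrArg PrimeSpectrum.asIdeal hQ
  have hpQ : (p : S) ∈ Q.asIdeal := by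
    have h1 : (p : A) ∈ Q.asIdeal.comap φ := by
      rw [hQ']
      exact Ideal.mem_span_singleton_self _
    simpa using h1
  rw [← Ideal.mem_span_singleton, ← hQ']
  exact (Ideal.span_singleton_le_iff_mem _).2 hpQ ha

theorem not_natCast_dvd_of_natAbs_lt {a : ℤ} (ha : a ≠ 0) {p : ℕ} (hp : a.natAbs < p) :
    ¬ (p : ℤ) ∣ a := by
  intro h
  have := Nat.le_of_dvd (Int.natAbs_pos.2 ha) (Int.natCast_dvd.1 h)
  omega

theorem MvPolynomial.exists_bound_not_dvd {σ : Type*} (g : MvPolynomial σ ℤ) (hg : g ≠ 0) :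
    ∃ N : ℕ, ∀ p : ℕ, p.Prime → N ≤ p → ¬ (p : MvPolynomial σ ℤ) ∣ g := by
  obtain ⟨m, hm⟩ := MvPolynomial.ne_zero_iff.1 hg
  refine ⟨(g.coeff m).natAbs + 1, fun p _ hpN h => ?_⟩
  rw [← map_natCast (MvPolynomial.C : ℤ →+* MvPolynomial σ ℤ),
    MvPolynomial.C_dvd_iff_dvd_coeff] at h
  exact not_natCast_dvd_of_natAbs_lt hm hpN (by simpa using h m)

theorem Polynomial.exists_bound_not_dvd (g : Polynomial ℤ) (hg : g ≠ 0) :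
    ∃ N : ℕ, ∀ p : ℕ, p.Prime → N ≤ p → ¬ (p : Polynomial ℤ) ∣ g := by
  refine ⟨g.leadingCoeff.natAbs + 1, fun p _ hpN h => ?_⟩
  rw [← map_natCast (Polynomial.C : ℤ →+* Polynomial ℤ), Polynomial.C_dvd_iff_dvd_coeff] at h
  exact not_natCast_dvd_of_natAbs_lt (Polynomial.leadingCoeff_ne_zero.2 hg) hpN
    (by simpa using h g.natDegree)

theorem MvPolynomial.prime_natCast {σ : Type*} {p : ℕ} (hp : p.Prime) :
    Prime (p : MvPolynomial σ ℤ) := by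
  rw [← map_natCast (MvPolynomial.C : ℤ →+* MvPolynomial σ ℤ), MvPolynomial.prime_C_iff]
  exact Nat.prime_iff_prime_int.1 hp

theorem Polynomial.prime_natCast {p : ℕ} (hp : p.Prime) : Prime (p : Polynomial ℤ) := by
  rw [← map_natCast (Polynomial.C : ℤ →+* Polynomial ℤ), Polynomial.prime_C_iff]
  exact Nat.prime_iff_prime_int.1 hp

/-- If `I` has finite index modulo `p` for almost all primes `p`, then every element of `R` is
algebraic over `ℤ` modulo `I`: otherwise `ℤ[t]` embeds into `R/I`, hence `𝔽_p[t]` into `R/(I, p)` for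
some `p`. -/
theorem exists_aeval_mem_of_finite {R : Type*} [CommRing R] [Algebra.FiniteType ℤ R] (I : Ideal R)
    (N₀ : ℕ) (hfin : ∀ p : ℕ, p.Prime → N₀ ≤ p → Finite (R ⧸ (I ⊔ Ideal.span {(p : R)}))) (r : R) :
    ∃ f : Polynomial ℤ, f ≠ 0 ∧ Polynomial.aeval r f ∈ I := by
  by_contra! hcon
  let φ : Polynomial ℤ →+* R ⧸ I := (Ideal.Quotient.mk I).comp (Polynomial.aeval r).toRingHom
  have hφ : Function.Injective φ := by
    rw [injective_iff_map_eq_zero]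
    intro f hf
    by_contra hf0
    exact hcon f hf0 (Ideal.Quotient.eq_zero_iff_mem.1 hf)
  have hft : φ.FiniteType := by
    refine RingHom.FiniteType.of_comp_finiteType (f := Int.castRingHom (Polynomial ℤ)) ?_
    have h1 : Algebra.FiniteType ℤ (R ⧸ I) :=
      Algebra.FiniteType.of_surjective (Ideal.Quotient.mkₐ ℤ I) Ideal.Quotient.mk_surjective
    rw [RingHom.ext_int (φ.comp (Int.castRingHom (Polynomial ℤ))) (algebraMap ℤ (R ⧸ I))]
    exact RingHom.finiteType_algebraMap.2 h1
  obtain ⟨N, hN⟩ := exists_bound_dvd_of_map_mem_span (fun p hp => Polynomial.prime_natCast hp)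
    Polynomial.exists_bound_not_dvd φ hφ hft
  obtain ⟨p, hpN, hp⟩ := Nat.exists_infinite_primes (max N N₀)
  have := hfin p hp (le_of_max_le_right hpN)
  obtain ⟨i, j, hij, h⟩ := Finite.exists_ne_map_eq_of_infinite
    fun n : ℕ => (Ideal.Quotient.mk (I ⊔ Ideal.span {(p : R)})) (r ^ n)
  have hmem := Ideal.Quotient.eq.1 h
  obtain ⟨y, hy, z, hz, hyz⟩ := Submodule.mem_sup.1 hmem
  have h2 : φ (Polynomial.X ^ i - Polynomial.X ^ j) ∈ Ideal.span {(p : R ⧸ I)} := by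
    have h3 : φ (Polynomial.X ^ i - Polynomial.X ^ j) = Ideal.Quotient.mk I z := by
      simp only [φ, RingHom.comp_apply, AlgHom.toRingHom_eq_coe, RingHom.coe_coe, map_sub, map_pow,
        Polynomial.aeval_X]
      rw [← map_pow, ← map_pow, ← map_sub, Ideal.Quotient.eq, ← hyz]
      simpa using hy
    obtain ⟨w, rfl⟩ := Ideal.mem_span_singleton.1 hz
    rw [h3, map_mul, map_natCast]
    exact Ideal.mem_span_singleton.2 (dvd_mul_right _ _)
  have h4 := hN p hp (le_of_max_le_left hpN) _ h2
  rw [← map_natCast (Polynomial.C : ℤ →+* Polynomial ℤ), Polynomial.C_dvd_iff_dvd_coeff] at h4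
  have h5 := h4 i
  rw [Polynomial.coeff_sub, Polynomial.coeff_X_pow_self, Polynomial.coeff_X_pow, if_neg hij,
    sub_zero] at h5
  exact not_natCast_dvd_of_natAbs_lt one_ne_zero hp.one_lt h5

/-! ### Primitive elements -/

open Polynomial IntermediateField in
/-- In characteristic zero, a domain `R` that is generically finite over `A` is birational to some
`A[θ]`, `θ ∈ R`, and a nonzero element of `A` is a multiple in `A[θ]` of `F'(θ)` for some polynomial
`F` killing `θ`. -/
theorem exists_primitive_data {A R : Type*} [CommRing A] [IsDomain A] [CharZero A] [CommRing R]
    [IsDomain R] [Algebra A R] (hAR : Function.Injective (algebraMap A R)) {e : ℕ} (ω : Fin e → R)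
    (hω : ∀ r : R, ∃ a : A, a ≠ 0 ∧ a • r ∈ Submodule.span A (Set.range ω)) :
    ∃ (θ : R) (F V : A[X]) (c c₂ : A) (P : Fin e → A[X]), c ≠ 0 ∧ c₂ ≠ 0 ∧ aeval θ F = 0 ∧
      algebraMap A R c = aeval θ V * aeval θ (derivative F) ∧
      ∀ j, algebraMap A R c₂ * ω j = aeval θ (P j) := by
  let E := FractionRing A
  let L := FractionRing R
  have : FaithfulSMul A R := (faithfulSMul_iff_algebraMap_injective A R).2 hAR
  have hRL : Function.Injective (algebraMap R L) := IsFractionRing.injective R L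
  have hAE : Function.Injective (algebraMap A E) := IsFractionRing.injective A E
  have hAL : Function.Injective (algebraMap A L) := by
    rw [IsScalarTower.algebraMap_eq A R L]
    exact hRL.comp hAR
  have : FaithfulSMul A L := (faithfulSMul_iff_algebraMap_injective A L).2 hAL
  let _ : Algebra E L := FractionRing.liftAlgebra A L
  have : IsScalarTower A E L := FractionRing.isScalarTower_liftAlgebra A L
  have : CharZero E := charZero_of_injective_algebraMap hAE
  have haev : ∀ (b : R) (P : A[X]), algebraMap R L (aeval b P) = aeval (algebraMap R L b) P :=
    fun b P => (Polynomial.aeval_algebraMap_apply L b P).symm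
  have hE0 : ∀ {a : A}, a ≠ 0 → algebraMap A E a ≠ 0 := fun ha h =>
    ha ((map_eq_zero_iff _ hAE).1 h)
  -- the `E`-subalgebra of `L` generated by `R` is the `E`-span of the `ω j`
  let W : Submodule E L := Submodule.span E (Set.range fun j => algebraMap R L (ω j))
  have hRW : ∀ r : R, algebraMap R L r ∈ W := by
    intro r
    obtain ⟨a, ha, har⟩ := hω r
    obtain ⟨u, hu⟩ := (Submodule.mem_span_range_iff_exists_fun A).1 har
    have h1 : algebraMap A E a • algebraMap R L r ∈ W := by
      have h2 : algebraMap A E a • algebraMap R L r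
          = ∑ j, algebraMap A E (u j) • algebraMap R L (ω j) := by
        have h3 := congrArg (algebraMap R L) hu
        simp only [map_sum, Algebra.smul_def, map_mul, ← IsScalarTower.algebraMap_apply] at h3 ⊢
        exact h3.symm
      rw [h2]
      exact Submodule.sum_mem _ fun j _ => W.smul_mem _ (Submodule.subset_span ⟨j, rfl⟩)
    have h4 := W.smul_mem (algebraMap A E a)⁻¹ h1
    rwa [inv_smul_smul₀ (hE0 ha)] at h4
  let D : Subalgebra E L := Algebra.adjoin E (Set.range (algebraMap R L))
  have hDW : Subalgebra.toSubmodule D ≤ W := by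
    have h1 : (Submonoid.closure (Set.range (algebraMap R L)) : Set L) =
        Set.range (algebraMap R L) := by
      have := Submonoid.closure_eq (MonoidHom.mrange (algebraMap R L : R →* L))
      exact congrArg (fun S : Submonoid L => (S : Set L)) this
    rw [Algebra.adjoin_eq_span, h1, Submodule.span_le]
    rintro _ ⟨r, rfl⟩
    exact hRW r
  have hWfd : FiniteDimensional E W := FiniteDimensional.span_of_finite E (Set.finite_range _)
  have hDfd : FiniteDimensional E D :=
    Submodule.finiteDimensional_of_le (S₁ := Subalgebra.toSubmodule D) hDW
  have hDtop : D = ⊤ := by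
    rw [eq_top_iff]
    intro z _
    have hRD : ∀ r : R, algebraMap R L r ∈ D := fun r => Algebra.subset_adjoin ⟨r, rfl⟩
    obtain ⟨x, y, _, rfl⟩ := IsFractionRing.div_surjective (A := R) z
    rw [div_eq_mul_inv]
    refine mul_mem (hRD x) ?_
    exact D.inv_mem_of_algebraic (x := ⟨_, hRD y⟩)
      ((Algebra.IsAlgebraic.isAlgebraic (R := E) (⟨_, hRD y⟩ : D)).algebraMap (A := L))
  have hWtop : W = ⊤ := by
    rw [eq_top_iff, ← Algebra.top_toSubmodule, ← hDtop]
    exact hDW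
  have hfd : FiniteDimensional E L := by
    rw [hDtop] at hDfd
    exact Module.Finite.equiv (Subalgebra.topEquiv (R := E) (A := L)).toLinearEquiv
  obtain ⟨α, hα⟩ := Field.exists_primitive_element E L
  -- clear denominators of `α`
  obtain ⟨a, ha, θ, hθ⟩ : ∃ a : A, a ≠ 0 ∧ ∃ θ : R, algebraMap R L θ = algebraMap A E a • α := by
    have hαW : α ∈ W := hWtop ▸ trivial
    obtain ⟨u, rfl⟩ := (Submodule.mem_span_range_iff_exists_fun E).1 hαW
    obtain ⟨s, hs⟩ := IsLocalization.exist_integer_multiples (nonZeroDivisors A) Finset.univ u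
    have hs' : ∀ j, ∃ t : A, algebraMap A E t = (s : A) • u j := fun j => hs j (Finset.mem_univ _)
    choose t ht using hs'
    refine ⟨s, nonZeroDivisors.ne_zero s.2, ∑ j, t j • ω j, ?_⟩
    rw [map_sum, Finset.smul_sum]
    refine Finset.sum_congr rfl fun j _ => ?_
    rw [smul_smul, ← Algebra.smul_def (s : A) (u j), ← ht, Algebra.smul_def, Algebra.smul_def,
      map_mul, ← IsScalarTower.algebraMap_apply, ← IsScalarTower.algebraMap_apply]
  set t : L := algebraMap R L θ with ht
  have htop : E⟮t⟯ = ⊤ := by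
    rw [eq_top_iff, ← hα, adjoin_simple_le_iff]
    have h1 : α = (algebraMap A E a)⁻¹ • t := by rw [hθ, inv_smul_smul₀ (hE0 ha)]
    rw [h1]
    exact E⟮t⟯.smul_mem (mem_adjoin_simple_self E t)
  have htint : IsIntegral E t := Algebra.IsIntegral.isIntegral t
  have htop' : Algebra.adjoin E {t} = ⊤ := by
    rw [← adjoin_simple_toSubalgebra_of_isAlgebraic htint.isAlgebraic, htop, top_toSubalgebra]
  have hnorm : ∀ Q : E[X], ∃ (a : A) (G : A[X]), a ≠ 0 ∧
      G.map (algebraMap A E) = C (algebraMap A E a) * Q := by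
    intro Q
    obtain ⟨b, hb, hG⟩ := IsLocalization.integerNormalization_spec (nonZeroDivisors A) Q
    refine ⟨b, _, nonZeroDivisors.ne_zero hb, hG.trans ?_⟩
    rw [← algebraMap_smul E, smul_eq_C_mul]
  -- every element of `L` is of the form `P(t) / a`
  have hclear : ∀ z : L, ∃ (a : A) (P : A[X]), a ≠ 0 ∧ algebraMap A L a * z = aeval t P := by
    intro z
    have hz : z ∈ Algebra.adjoin E {t} := htop' ▸ trivial
    rw [Algebra.adjoin_singleton_eq_range_aeval] at hz
    obtain ⟨Q, rfl⟩ := hz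
    obtain ⟨b, G, hb, hG⟩ := hnorm Q
    refine ⟨b, G, hb, ?_⟩
    rw [← Polynomial.aeval_map_algebraMap E, hG, map_mul, aeval_C, ← IsScalarTower.algebraMap_apply]
    rfl
  obtain ⟨b, F, hb, hF⟩ := hnorm (minpoly E t)
  have hFt : aeval t F = 0 := by
    rw [← Polynomial.aeval_map_algebraMap E, hF, map_mul, minpoly.aeval, mul_zero]
  have hF't : aeval t (derivative F) ≠ 0 := by
    rw [← Polynomial.aeval_map_algebraMap E, ← derivative_map, hF, derivative_C_mul, map_mul, aeval_C]
    have h1 : aeval t (derivative (minpoly E t)) ≠ 0 :=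
      (Algebra.IsSeparable.isSeparable E t).aeval_derivative_ne_zero (minpoly.aeval _ _)
    exact mul_ne_zero ((_root_.map_ne_zero _).2 (hE0 hb)) h1
  obtain ⟨c, V, hc, hV⟩ := hclear (aeval t (derivative F))⁻¹
  choose g Q hg hQ using fun j => hclear (algebraMap R L (ω j))
  refine ⟨θ, F, V, c, ∏ j, g j, fun j => C (∏ i ∈ Finset.univ.erase j, g i) * Q j, hc,
    Finset.prod_ne_zero_iff.2 fun j _ => hg j, hRL ?_, hRL ?_, fun j => hRL ?_⟩
  · rw [haev, hFt, map_zero]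
  · rw [map_mul, haev, haev, ← ht, ← hV, inv_mul_cancel_right₀ hF't,
      ← IsScalarTower.algebraMap_apply]
  · rw [haev, ← ht, map_mul, map_mul, ← hQ, aeval_C, ← IsScalarTower.algebraMap_apply,
      ← Finset.prod_erase_mul _ _ (Finset.mem_univ j), map_mul, mul_assoc]

/-! ### Noether normalization over the integers -/

/-- Noether normalization of the `ℚ`-subalgebra of `L` generated by `R`, with denominators cleared:
`R` contains a polynomial ring `ℤ[x₁, …, x_s]`, over which `R[1/N]` is generated by finitely many
elements of `R`. -/
theorem exists_noether_data_of_field (R L : Type*) [CommRing R] [Field L] [CharZero L] [Algebra R L]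
    (hι : Function.Injective (algebraMap R L)) [hft : Algebra.FiniteType ℤ R] :
    ∃ (s : ℕ) (x : Fin s → R),
      Function.Injective (MvPolynomial.aeval x : MvPolynomial (Fin s) ℤ →ₐ[ℤ] R) ∧
      ∃ (e : ℕ) (ω : Fin e → R) (N : ℕ), 0 < N ∧
        ∀ r : R, ∃ (k : ℕ) (a : Fin e → MvPolynomial (Fin s) ℤ),
          (N : R) ^ k * r = ∑ j, MvPolynomial.aeval x (a j) * ω j := by
  obtain ⟨G, hG⟩ := hft.out
  let S : Subalgebra ℚ L := Algebra.adjoin ℚ (algebraMap R L '' (G : Set R))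
  have hSft : Algebra.FiniteType ℚ S :=
    Algebra.FiniteType.adjoin_of_finite (G.finite_toSet.image _)
  have hRS : ∀ r : R, algebraMap R L r ∈ S := by
    intro r
    have hr : r ∈ Algebra.adjoin ℤ (G : Set R) := hG ▸ trivial
    induction hr using Algebra.adjoin_induction with
    | mem t ht => exact Algebra.subset_adjoin ⟨t, ht, rfl⟩
    | algebraMap z => simp
    | add a b _ _ ha hb => rw [map_add]; exact add_mem ha hb
    | mul a b _ _ ha hb => rw [map_mul]; exact mul_mem ha hb
  have hden : ∀ z ∈ S, ∃ n : ℕ, 0 < n ∧ ∃ r : R, algebraMap R L r = n * z := by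
    intro z hz
    induction hz using Algebra.adjoin_induction with
    | mem t ht =>
      obtain ⟨r, -, rfl⟩ := ht
      exact ⟨1, one_pos, r, by simp⟩
    | algebraMap q =>
      refine ⟨q.den, q.den_pos, (q.num : R), ?_⟩
      have h1 : (q.den : L) * (q : L) = (q.num : L) := by
        exact_mod_cast Rat.den_mul_eq_num q
      simpa using h1.symm
    | add a b _ _ ha hb =>
      obtain ⟨n, hn, r, hr⟩ := ha
      obtain ⟨n', hn', r', hr'⟩ := hb
      refine ⟨n * n', mul_pos hn hn', n' * r + n * r', ?_⟩
      rw [map_add, map_mul, map_mul, hr, hr', map_natCast, map_natCast]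
      push_cast
      ring
    | mul a b _ _ ha hb =>
      obtain ⟨n, hn, r, hr⟩ := ha
      obtain ⟨n', hn', r', hr'⟩ := hb
      refine ⟨n * n', mul_pos hn hn', r * r', ?_⟩
      rw [map_mul, hr, hr']
      push_cast
      ring
  obtain ⟨s, g, hginj, hgfin⟩ := exists_finite_inj_algHom_of_fg ℚ S
  -- scale the variables into `R`
  choose n hn x hx using fun i : Fin s => hden (g (MvPolynomial.X i)) (g (MvPolynomial.X i)).2
  refine ⟨s, x, ?_, ?_⟩
  · have h1 : AlgebraicIndependent ℚ fun i => g (MvPolynomial.X i) := by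
      rw [AlgebraicIndependent]
      convert hginj
      refine MvPolynomial.algHom_ext fun i => ?_
      simp
    have h2 : AlgebraicIndependent ℚ fun i =>
        Polynomial.aeval (g (MvPolynomial.X i)) (Polynomial.C (n i : ℚ) * Polynomial.X) := by
      refine h1.polynomial_aeval_of_transcendental fun i => ?_
      have h3 := (Polynomial.transcendental_X (R := ℚ)).aeval (Polynomial.C (n i : ℚ) * Polynomial.X)
        (by rw [Polynomial.natDegree_C_mul_X _ (by exact_mod_cast (hn i).ne')]; exact one_ne_zero)
        (mem_nonZeroDivisors_of_ne_zero (by simpa using (hn i).ne'))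
      simpa [Polynomial.algebraMap_eq] using h3
    have h4 := (h2.map' (f := S.val) Subtype.val_injective).restrictScalars
      (K := ℚ) (R := ℤ) (RingHom.injective_int _)
    have h5 : (S.val ∘ fun i =>
        Polynomial.aeval (g (MvPolynomial.X i)) (Polynomial.C (n i : ℚ) * Polynomial.X)) =
        fun i => algebraMap R L (x i) := by
      funext i
      simp [hx]
    rw [h5] at h4
    rw [injective_iff_map_eq_zero]
    intro P hP
    refine (injective_iff_map_eq_zero _).1 h4 P ?_
    have h6 := MvPolynomial.aeval_algebraMap_apply (R := ℤ) L x P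
    rw [hP, map_zero] at h6
    exact h6
  let A := MvPolynomial (Fin s) ℤ
  let _ : Algebra A R := (MvPolynomial.aeval x : A →ₐ[ℤ] R).toAlgebra
  have hAR : ∀ a : A, algebraMap A R a = MvPolynomial.aeval x a := fun _ => rfl
  let _ : Algebra (MvPolynomial (Fin s) ℚ) S := g.toRingHom.toAlgebra
  have hfin : Module.Finite (MvPolynomial (Fin s) ℚ) S := hgfin
  obtain ⟨e, ω', hω'⟩ := Module.Finite.exists_fin (R := MvPolynomial (Fin s) ℚ) (M := S)
  choose l hl ω hω using fun j => hden (ω' j) (ω' j).2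
  let M : Submodule A R := Submodule.span A (Set.range ω)
  have hnat : ∀ (n : ℕ) {m : R}, m ∈ M → (n : R) * m ∈ M := by
    intro n m hm
    rw [← nsmul_eq_mul]
    exact M.nsmul_mem hm n
  -- elements of `S` with denominators cleared lie in `M`
  have hadd : ∀ z z' : L, (∃ n : ℕ, 0 < n ∧ ∃ r ∈ M, algebraMap R L r = n * z) →
      (∃ n : ℕ, 0 < n ∧ ∃ r ∈ M, algebraMap R L r = n * z') →
      ∃ n : ℕ, 0 < n ∧ ∃ r ∈ M, algebraMap R L r = n * (z + z') := by
    rintro z z' ⟨n, hn, r, hrM, hr⟩ ⟨n', hn', r', hrM', hr'⟩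
    refine ⟨n * n', mul_pos hn hn', n' * r + n * r', add_mem (hnat _ hrM) (hnat _ hrM'), ?_⟩
    rw [map_add, map_mul, map_mul, hr, hr', map_natCast, map_natCast]
    push_cast
    ring
  have hsingle : ∀ (a : MvPolynomial (Fin s) ℚ) (j : Fin e),
      ∃ n : ℕ, 0 < n ∧ ∃ r ∈ M, algebraMap R L r = n * ((g a : L) * (ω' j : L)) := by
    intro a j
    induction a using MvPolynomial.induction_on with
    | C q =>
      refine ⟨q.den * l j, mul_pos q.den_pos (hl j), (q.num : R) * ω j, ?_, ?_⟩
      · rw [← zsmul_eq_mul]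
        exact zsmul_mem (show ω j ∈ M from Submodule.subset_span ⟨j, rfl⟩) _
      · have h1 : (q.den : L) * (q : L) = (q.num : L) := by
          exact_mod_cast Rat.den_mul_eq_num q
        have h2 : ((g (MvPolynomial.C q) : S) : L) = (q : L) := by
          have := g.commutes q
          rw [MvPolynomial.algebraMap_eq] at this
          rw [this]
          simp
        rw [map_mul, hω, map_intCast, ← h1, h2]
        push_cast
        ring
    | add a b ha hb =>
      have h := hadd _ _ ha hb
      rw [← add_mul] at h
      simpa using h
    | mul_X a i ha =>
      obtain ⟨k, hk, r, hrM, hr⟩ := ha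
      refine ⟨k * n i, mul_pos hk (hn i), x i * r, ?_, ?_⟩
      · have h1 := M.smul_mem (MvPolynomial.X i) hrM
        rw [Algebra.smul_def, hAR, MvPolynomial.aeval_X] at h1
        exact h1
      · rw [map_mul, hr, hx, map_mul]
        push_cast
        ring
  have hclear : ∀ r : R, ∃ n : ℕ, 0 < n ∧ (n : R) * r ∈ M := by
    intro r
    have h1 : (⟨_, hRS r⟩ : S) ∈ Submodule.span (MvPolynomial (Fin s) ℚ) (Set.range ω') :=
      hω' ▸ trivial
    obtain ⟨u, hu⟩ := (Submodule.mem_span_range_iff_exists_fun _).1 h1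
    have h2 : ∀ T : Finset (Fin e), ∃ n : ℕ, 0 < n ∧ ∃ r ∈ M,
        algebraMap R L r = n * ∑ j ∈ T, ((g (u j) : L) * (ω' j : L)) := by
      intro T
      induction T using Finset.induction_on with
      | empty => exact ⟨1, one_pos, 0, zero_mem _, by simp⟩
      | insert j T hj ih =>
        rw [Finset.sum_insert hj]
        exact hadd _ _ (hsingle _ _) ih
    obtain ⟨n, hn, r', hrM₂, hr'⟩ := h2 Finset.univ
    have h3 : ∑ j, ((g (u j) : L) * (ω' j : L)) = algebraMap R L r := by
      have h4 := congrArg (Subtype.val : S → L) hu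
      rw [AddSubmonoidClass.coe_finsetSum] at h4
      exact h4
    rw [h3, ← map_natCast (algebraMap R L), ← map_mul] at hr'
    rw [hι hr'] at hrM₂
    exact ⟨n, hn, hrM₂⟩
  -- a common denominator `N` for `1` and the products of generators with the `ω j`
  choose ν hν hνM using hclear
  classical
  let T : Finset R := insert 1 (Finset.image₂ (fun t j => t * ω j) G Finset.univ)
  let N : ℕ := ∏ t ∈ T, ν t
  have hNT : ∀ t ∈ T, (N : R) * t ∈ M := by
    intro t ht
    have h1 := hnat (∏ t' ∈ T.erase t, ν t') (hνM t)
    rwa [← mul_assoc, ← Nat.cast_mul, Finset.prod_erase_mul T ν ht] at h1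
  have hstable : ∀ r : R, ∃ k : ℕ, ∀ m ∈ M, (N : R) ^ k * r * m ∈ M := by
    intro r
    have hr : r ∈ Algebra.adjoin ℤ (G : Set R) := hG ▸ trivial
    induction hr using Algebra.adjoin_induction with
    | mem t ht =>
      refine ⟨1, fun m hm => ?_⟩
      rw [pow_one]
      induction hm using Submodule.span_induction with
      | mem m hm =>
        obtain ⟨j, rfl⟩ := hm
        rw [mul_assoc]
        exact hNT _ (Finset.mem_insert_of_mem
          (Finset.mem_image₂.2 ⟨t, ht, j, Finset.mem_univ _, rfl⟩))
      | zero => rw [mul_zero]; exact zero_mem _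
      | add a b _ _ ha hb => rw [mul_add]; exact add_mem ha hb
      | smul a m _ hm =>
        rw [mul_smul_comm]
        exact M.smul_mem a hm
    | algebraMap z =>
      refine ⟨0, fun m hm => ?_⟩
      rw [pow_zero, one_mul, ← Algebra.smul_def]
      exact zsmul_mem hm z
    | add a b _ _ ha hb =>
      obtain ⟨k, hk⟩ := ha
      obtain ⟨k', hk'⟩ := hb
      refine ⟨k + k', fun m hm => ?_⟩
      have h1 := add_mem (hnat (N ^ k') (hk m hm)) (hnat (N ^ k) (hk' m hm))
      push_cast at h1
      convert h1 using 1
      ring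
    | mul a b _ _ ha hb =>
      obtain ⟨k, hk⟩ := ha
      obtain ⟨k', hk'⟩ := hb
      refine ⟨k + k', fun m hm => ?_⟩
      have h1 := hk _ (hk' m hm)
      convert h1 using 1
      ring
  refine ⟨e, ω, N, Finset.prod_pos fun t _ => hν t, fun r => ?_⟩
  obtain ⟨k, hk⟩ := hstable r
  have h1 := hk _ (hNT 1 (Finset.mem_insert_self _ _))
  obtain ⟨a, ha⟩ := (Submodule.mem_span_range_iff_exists_fun A).1 h1
  refine ⟨k + 1, a, ?_⟩
  calc (N : R) ^ (k + 1) * r = (N : R) ^ k * r * (N * 1) := by ring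
    _ = ∑ j, a j • ω j := ha.symm
    _ = _ := Finset.sum_congr rfl fun j _ => by rw [Algebra.smul_def, hAR]

/-! ### The fibers -/

section Fiber

variable {R : Type*} [CommRing R] {s : ℕ} (x : Fin s → R) {p : ℕ} {B : Type*} [CommRing B]
  [Algebra (ZMod p) B] (π : R →+* B)

theorem aeval_map_castRingHom (g : MvPolynomial (Fin s) ℤ) :
    MvPolynomial.aeval (fun i => π (x i)) (MvPolynomial.map (Int.castRingHom (ZMod p)) g) =
      π (MvPolynomial.aeval x g) := by
  have h : ((MvPolynomial.aeval (R := ZMod p) (fun i => π (x i))).toRingHom.comp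
      (MvPolynomial.map (Int.castRingHom (ZMod p)))) =
      π.comp (MvPolynomial.aeval x : MvPolynomial (Fin s) ℤ →ₐ[ℤ] R).toRingHom := by
    apply MvPolynomial.ringHom_ext
    · intro r
      simp
    · intro i
      simp
  exact RingHom.congr_fun h g

theorem MvPolynomial.map_castRingHom_eq_zero_iff {σ : Type*} (g : MvPolynomial σ ℤ) :
    MvPolynomial.map (Int.castRingHom (ZMod p)) g = 0 ↔ (p : MvPolynomial σ ℤ) ∣ g := by
  rw [← map_natCast (MvPolynomial.C : ℤ →+* MvPolynomial σ ℤ), MvPolynomial.C_dvd_iff_dvd_coeff,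
    MvPolynomial.ext_iff]
  simp [MvPolynomial.coeff_map, ZMod.intCast_zmod_eq_zero_iff_dvd]

theorem Polynomial.map_castRingHom_eq_zero_iff (g : Polynomial ℤ) :
    Polynomial.map (Int.castRingHom (ZMod p)) g = 0 ↔ (p : Polynomial ℤ) ∣ g := by
  rw [← map_natCast (Polynomial.C : ℤ →+* Polynomial ℤ), Polynomial.C_dvd_iff_dvd_coeff,
    Polynomial.ext_iff]
  simp [ZMod.intCast_zmod_eq_zero_iff_dvd]

/-- `𝔽_p[x₁, …, x_s]` embeds into `B` when the kernel of `ℤ[x₁, …, x_s] → B` is generated by `p`. -/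
theorem injective_aeval_fiber
    (hx : ∀ a : MvPolynomial (Fin s) ℤ, π (MvPolynomial.aeval x a) = 0 →
      (p : MvPolynomial (Fin s) ℤ) ∣ a) :
    Function.Injective (MvPolynomial.aeval (R := ZMod p) fun i => π (x i)) := by
  rw [injective_iff_map_eq_zero]
  intro g hg
  obtain ⟨a, rfl⟩ := MvPolynomial.map_surjective (Int.castRingHom (ZMod p))
    (ZMod.ringHom_surjective _) g
  rw [aeval_map_castRingHom] at hg
  exact (MvPolynomial.map_castRingHom_eq_zero_iff a).2 (hx a hg)

/-- Generators of `R[1/N]` over `ℤ[x₁, …, x_s]` generate `B` over `𝔽_p[x₁, …, x_s]`, since `N` is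
invertible modulo `p`. -/
theorem exists_sum_fiber [Fact p.Prime] (hπ : Function.Surjective π) {e : ℕ} (ω : Fin e → R) {N : ℕ}
    (hN : ∀ r : R, ∃ (k : ℕ) (a : Fin e → MvPolynomial (Fin s) ℤ),
      (N : R) ^ k * r = ∑ j, MvPolynomial.aeval x (a j) * ω j)
    (hpN : ¬ p ∣ N) (b : B) :
    ∃ a : Fin e → MvPolynomial (Fin s) (ZMod p),
      b = ∑ j, MvPolynomial.aeval (fun i => π (x i)) (a j) * π (ω j) := by
  obtain ⟨r, rfl⟩ := hπ b
  obtain ⟨k, a, ha⟩ := hN r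
  have hN0 : (N : ZMod p) ≠ 0 := by rwa [Ne, ZMod.natCast_eq_zero_iff]
  refine ⟨fun j => MvPolynomial.C (((N : ZMod p) ^ k)⁻¹) *
    MvPolynomial.map (Int.castRingHom (ZMod p)) (a j), ?_⟩
  have h1 : (N : B) ^ k * π r = ∑ j, π (MvPolynomial.aeval x (a j)) * π (ω j) := by
    have := congrArg π ha
    simpa using this
  have h2 : algebraMap (ZMod p) B (((N : ZMod p) ^ k)⁻¹) * (N : B) ^ k = 1 := by
    rw [← map_natCast (algebraMap (ZMod p) B) N, ← map_pow, ← map_mul,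
      inv_mul_cancel₀ (pow_ne_zero _ hN0), map_one]
  simp only [map_mul, MvPolynomial.aeval_C, aeval_map_castRingHom, mul_assoc]
  rw [← Finset.mul_sum, ← h1, ← mul_assoc, h2, one_mul]

theorem ringKrullDim_fiber [Fact p.Prime] (hπ : Function.Surjective π) {e : ℕ} (ω : Fin e → R) {N : ℕ}
    (hN : ∀ r : R, ∃ (k : ℕ) (a : Fin e → MvPolynomial (Fin s) ℤ),
      (N : R) ^ k * r = ∑ j, MvPolynomial.aeval x (a j) * ω j)
    (hpN : ¬ p ∣ N)
    (hx : ∀ a : MvPolynomial (Fin s) ℤ, π (MvPolynomial.aeval x a) = 0 →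
      (p : MvPolynomial (Fin s) ℤ) ∣ a) :
    ringKrullDim B = s := by
  let _ : Algebra (MvPolynomial (Fin s) (ZMod p)) B :=
    (MvPolynomial.aeval (R := ZMod p) fun i => π (x i)).toRingHom.toAlgebra
  have hfin : Module.Finite (MvPolynomial (Fin s) (ZMod p)) B := by
    suffices h : Submodule.span (MvPolynomial (Fin s) (ZMod p))
        (Set.range fun j => π (ω j)) = ⊤ from
      ⟨h ▸ Submodule.fg_span (Set.finite_range _)⟩
    rw [eq_top_iff]
    intro b _
    obtain ⟨a, ha⟩ := exists_sum_fiber x π hπ ω hN hpN b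
    exact (Submodule.mem_span_range_iff_exists_fun _).2 ⟨a, ha.symm⟩
  rw [ringKrullDim_eq_of_isIntegral_of_injective (A := MvPolynomial (Fin s) (ZMod p))
    (injective_aeval_fiber x π hx), MvPolynomial.ringKrullDim_of_isNoetherianRing,
    ringKrullDim_eq_zero_of_field]
  simp

open Polynomial in
/-- The estimate for the reduction `B` of `R` modulo `p`, in terms of data over `ℤ` that reduce well;
the constant `e s m h^(s-1)` does not depend on `p`. -/
theorem abs_finrank_frobeniusPower_fiber_sub_le [Fact p.Prime] [IsDomain B] [CharP B p] (hs : 0 < s)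
    (hπ : Function.Surjective π) {e : ℕ} (ω : Fin e → R) {N : ℕ}
    (hN : ∀ r : R, ∃ (k : ℕ) (a : Fin e → MvPolynomial (Fin s) ℤ),
      (N : R) ^ k * r = ∑ j, MvPolynomial.aeval x (a j) * ω j)
    (hpN : ¬ p ∣ N)
    (hx : ∀ a : MvPolynomial (Fin s) ℤ, π (MvPolynomial.aeval x a) = 0 →
      (p : MvPolynomial (Fin s) ℤ) ∣ a)
    {h m : ℕ} (hh : 0 < h) (f : Fin s → ℤ[X]) (hf0 : ∀ i, ¬ (p : ℤ[X]) ∣ f i)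
    (hf : ∀ i, (f i).natDegree ≤ h) (I : Ideal R) (hI : ∀ i, aeval (x i) (f i) ∈ I)
    (c c₂ : MvPolynomial (Fin s) ℤ) (hc0 : ¬ (p : MvPolynomial (Fin s) ℤ) ∣ c)
    (hc₂ : ¬ (p : MvPolynomial (Fin s) ℤ) ∣ c₂) (hc : ∀ i, c.degreeOf i ≤ m)
    (θ : R) (F V : (MvPolynomial (Fin s) ℤ)[X]) (P : Fin e → (MvPolynomial (Fin s) ℤ)[X])
    (hF : F.eval₂ (MvPolynomial.aeval x : _ →ₐ[ℤ] R).toRingHom θ = 0)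
    (hV : MvPolynomial.aeval x c = V.eval₂ (MvPolynomial.aeval x : _ →ₐ[ℤ] R).toRingHom θ *
      F.derivative.eval₂ (MvPolynomial.aeval x : _ →ₐ[ℤ] R).toRingHom θ)
    (hP : ∀ j, MvPolynomial.aeval x c₂ * ω j =
      (P j).eval₂ (MvPolynomial.aeval x : _ →ₐ[ℤ] R).toRingHom θ)
    (q : ℕ) (hq : 0 < q) :
    |(p : ℝ) ^ s * Module.finrank (ZMod p) (B ⧸ (I.map π).frobeniusPower q) -
      Module.finrank (ZMod p) (B ⧸ (I.map π).frobeniusPower (q * p))| ≤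
      (e * s * m * h ^ (s - 1) : ℕ) * (p : ℝ) ^ s * (q : ℝ) ^ (s - 1) := by
  let _ : Algebra (MvPolynomial (Fin s) (ZMod p)) B :=
    (MvPolynomial.aeval (R := ZMod p) fun i => π (x i)).toRingHom.toAlgebra
  have hmap : ∀ g, algebraMap (MvPolynomial (Fin s) (ZMod p)) B g =
    MvPolynomial.aeval (fun i => π (x i)) g := fun g => rfl
  have : IsScalarTower (ZMod p) (MvPolynomial (Fin s) (ZMod p)) B :=
    IsScalarTower.of_algebraMap_eq fun a => by
      rw [hmap, MvPolynomial.algebraMap_eq, MvPolynomial.aeval_C]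
  let r : MvPolynomial (Fin s) ℤ →+* MvPolynomial (Fin s) (ZMod p) :=
    MvPolynomial.map (Int.castRingHom (ZMod p))
  have hr : ∀ g, algebraMap (MvPolynomial (Fin s) (ZMod p)) B (r g) = π (MvPolynomial.aeval x g) :=
    fun g => aeval_map_castRingHom x π g
  have hrθ : ∀ G : (MvPolynomial (Fin s) ℤ)[X], aeval (π θ) (G.map r) =
      π (G.eval₂ (MvPolynomial.aeval x : _ →ₐ[ℤ] R).toRingHom θ) := by
    intro G
    rw [aeval_def, eval₂_map, hom_eval₂]
    congr 1
    exact RingHom.ext hr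
  refine abs_finrank_frobeniusPower_sub_le hs (injective_aeval_fiber x π hx) hh
    (fun j => π (ω j)) ?_ (fun i => (f i).map (Int.castRingHom (ZMod p)))
    (fun i => (Polynomial.map_castRingHom_eq_zero_iff _).not.2 (hf0 i))
    (fun i => natDegree_map_le.trans (hf i)) (I.map π) ?_ (r c)
    ((MvPolynomial.map_castRingHom_eq_zero_iff _).not.2 hc0) ?_ (π θ) (F.map r) (V.map r)
    ?_ ?_ (r c₂) ((MvPolynomial.map_castRingHom_eq_zero_iff _).not.2 hc₂)
    (fun j => (P j).map r) ?_ q hq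
  · rw [eq_top_iff]
    intro b _
    obtain ⟨a, ha⟩ := exists_sum_fiber x π hπ ω hN hpN b
    exact (Submodule.mem_span_range_iff_exists_fun _).2 ⟨a, ha.symm⟩
  · intro i
    have h1 : algebraMap (MvPolynomial (Fin s) (ZMod p)) B
        (aeval (MvPolynomial.X i) ((f i).map (Int.castRingHom (ZMod p)))) =
        π (aeval (x i) (f i)) := by
      rw [← aeval_algebraMap_apply, hmap, MvPolynomial.aeval_X, aeval_def, eval₂_map, aeval_def,
        hom_eval₂]
      congr 1
      exact RingHom.ext_int _ _
    rw [h1]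
    exact Ideal.mem_map_of_mem π (hI i)
  · intro i
    refine le_trans ?_ (hc i)
    rw [MvPolynomial.degreeOf_le_iff]
    intro t ht
    exact MvPolynomial.degreeOf_le_iff.1 le_rfl t (MvPolynomial.support_map_subset _ _ ht)
  · rw [hrθ, hF, map_zero]
  · rw [derivative_map, hrθ, hrθ, hr, hV, map_mul]
  · intro j
    rw [hrθ, hr, ← hP, map_mul]

end Fiber

/-! ### The uniform bound -/

/-- The passage from the unnormalized estimate to the normalized one; the inequality `2 ≤ d` makes
the exponent `n - d + 2` at most `n`. -/
theorem abs_div_pow_sub_div_pow_le {a b K P : ℝ} (hP : 1 ≤ P) (hK : 0 ≤ K) {n d : ℕ} (hd : 2 ≤ d)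
    (h : |P ^ d * a - b| ≤ K * P ^ d * (P ^ n) ^ (d - 1)) :
    |a / P ^ (n * d) - b / P ^ ((n + 1) * d)| ≤ (K + 1) / P ^ ((n : ℤ) - d + 2) := by
  have hP0 : 0 < P := by linarith
  have h1 : a / P ^ (n * d) - b / P ^ ((n + 1) * d) = (P ^ d * a - b) / P ^ ((n + 1) * d) := by
    rw [add_mul, one_mul, pow_add]
    field_simp
  obtain ⟨k, rfl⟩ : ∃ k, d = k + 2 := ⟨d - 2, by omega⟩
  rw [h1, abs_div, abs_of_pos (pow_pos hP0 _), div_le_div_iff₀ (by positivity) (by positivity)]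
  have h2 : P ^ ((n : ℤ) - (k + 2 : ℕ) + 2) * P ^ k = P ^ n := by
    rw [← zpow_natCast, ← zpow_add₀ hP0.ne', ← zpow_natCast]
    congr 1
    push_cast
    ring
  have hk : 1 ≤ P ^ k := one_le_pow₀ hP
  have h3 : P ^ ((n : ℤ) - (k + 2 : ℕ) + 2) ≤ P ^ n := by
    rw [← h2]
    exact le_mul_of_one_le_right (by positivity) hk
  calc |P ^ (k + 2) * a - b| * P ^ ((n : ℤ) - (k + 2 : ℕ) + 2)
      ≤ (K * P ^ (k + 2) * (P ^ n) ^ (k + 2 - 1)) * P ^ n := by gcongr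
    _ = K * P ^ ((n + 1) * (k + 2)) := by
      rw [show k + 2 - 1 = k + 1 from rfl]
      ring
    _ ≤ (K + 1) * P ^ ((n + 1) * (k + 2)) := by
      gcongr
      linarith

theorem fiber_colength_frobeniusPower_succ_diff_le
    (R : Type*) [CommRing R] [IsDomain R] [CharZero R]
    (hfg : Algebra.FiniteType ℤ R)
    (𝒜 : ℕ → Submodule ℤ R) [GradedAlgebra 𝒜]
    -- `R` is generated in degree 1 over `R₀`
    (hgen : Algebra.adjoin ℤ ((𝒜 0 : Set R) ∪ (𝒜 1 : Set R)) = ⊤)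
    (I : Ideal R) (hIhom : I.IsHomogeneous 𝒜) (hIne : I ≠ ⊤)
    (d : ℕ) (hd : 2 ≤ d)
    -- for almost all primes `p` (say `p ≥ N₀`) the fiber `R_p` has
    -- characteristic `p`, is a standard graded ring of dimension `d` which is
    -- geometrically integral, and `I_p ⊂ R_p` has finite colength:
    (N₀ : ℕ)
    (hchar : ∀ p : ℕ, p.Prime → N₀ ≤ p → CharP (modPFiber R p) p)
    (hstd : ∀ p : ℕ, (hp : p.Prime) → (hN : N₀ ≤ p) →
      IsField (Subring.closure ((Ideal.Quotient.mk _) '' (𝒜 0 : Set R)) :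
        Subring (modPFiber R p)))
    (hdim : ∀ p : ℕ, (hp : p.Prime) → (hN : N₀ ≤ p) →
      ringKrullDim (modPFiber R p) = d)
    (hgeom : ∀ p : ℕ, (hp : p.Prime) → (hN : N₀ ≤ p) →
      haveI : Fact p.Prime := ⟨hp⟩
      haveI := hchar p hp hN
      ModPFiberGeomIntegral R p)
    (hfin : ∀ p : ℕ, (hp : p.Prime) → (hN : N₀ ≤ p) →
      haveI := hchar p hp hN
      ModPFiberFiniteColength p (modPFiberIdeal I p)) :
    ∃ C₁ : ℝ, 0 < C₁ ∧ ∃ N₁ : ℕ,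
      ∀ p : ℕ, (hp : p.Prime) → (hN : N₁ ≤ p) → (hN₀ : N₀ ≤ p) → ∀ n : ℕ, 1 ≤ n →
        haveI := hchar p hp hN₀
        |(fiberColength p ((modPFiberIdeal I p).frobeniusPower (p ^ n)) : ℝ) /
              (p : ℝ) ^ (n * d) -
            (fiberColength p ((modPFiberIdeal I p).frobeniusPower (p ^ (n + 1))) : ℝ) /
              (p : ℝ) ^ ((n + 1) * d)| ≤
          C₁ / (p : ℝ) ^ ((n : ℤ) - d + 2) := by
  -- Noether normalization and a primitive element over `ℤ`
  obtain ⟨s, x, hx, e, ω, N, hN0, hN⟩ := exists_noether_data_of_field R (FractionRing R)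
    (IsFractionRing.injective R (FractionRing R))
  let ψ : MvPolynomial (Fin s) ℤ →+* R := (MvPolynomial.aeval x : _ →ₐ[ℤ] R).toRingHom
  let _ : Algebra (MvPolynomial (Fin s) ℤ) R := ψ.toAlgebra
  obtain ⟨θ, F, V, c, c₂, P, hc0, hc₂0, hF, hV, hP⟩ :=
    exists_primitive_data (A := MvPolynomial (Fin s) ℤ) (R := R) hx ω (fun r => by
      obtain ⟨k, a, ha⟩ := hN r
      refine ⟨(N : MvPolynomial (Fin s) ℤ) ^ k, pow_ne_zero _ (Nat.cast_ne_zero.2 hN0.ne'), ?_⟩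
      refine (Submodule.mem_span_range_iff_exists_fun _).2 ⟨a, ?_⟩
      rw [Algebra.smul_def, map_pow, map_natCast, ha]
      rfl)
  -- univariate polynomials in the `x i` lying in `I`
  have hfin' : ∀ p : ℕ, p.Prime → N₀ ≤ p → Finite (R ⧸ (I ⊔ Ideal.span {(p : R)})) := by
    intro p hp hpN
    have : Fact p.Prime := ⟨hp⟩
    have := hchar p hp hpN
    let _ : Algebra (ZMod p) (modPFiber R p) := ZMod.algebra _ p
    have h1 : Module.Finite (ZMod p) (modPFiber R p ⧸ modPFiberIdeal I p) := hfin p hp hpN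
    have h2 : Finite (modPFiber R p ⧸ I.map (Ideal.Quotient.mk (Ideal.span {(p : R)}))) :=
      Module.finite_of_finite (M := modPFiber R p ⧸ modPFiberIdeal I p) (ZMod p)
    rw [sup_comm]
    exact Finite.of_equiv _ (DoubleQuot.quotQuotEquivQuotSup (Ideal.span {(p : R)}) I).toEquiv
  choose f hf0 hfI using fun i => exists_aeval_mem_of_finite I N₀ hfin' (x i)
  -- bounds beyond which the data reduce well
  obtain ⟨M₁, hM₁⟩ := exists_bound_dvd_of_map_mem_span
    (fun p hp => MvPolynomial.prime_natCast hp) MvPolynomial.exists_bound_not_dvd ψ hx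
    (RingHom.FiniteType.of_comp_finiteType (f := Int.castRingHom (MvPolynomial (Fin s) ℤ)) (by
      rw [RingHom.ext_int (ψ.comp (Int.castRingHom _)) (algebraMap ℤ R)]
      exact RingHom.finiteType_algebraMap.2 hfg))
  obtain ⟨M₂, hM₂⟩ := MvPolynomial.exists_bound_not_dvd c hc0
  obtain ⟨M₃, hM₃⟩ := MvPolynomial.exists_bound_not_dvd c₂ hc₂0
  choose M₄ hM₄ using fun i => Polynomial.exists_bound_not_dvd (f i) (hf0 i)
  have hker : ∀ p : ℕ, p.Prime → M₁ ≤ p → ∀ a : MvPolynomial (Fin s) ℤ,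
      Ideal.Quotient.mk (Ideal.span {(p : R)}) (MvPolynomial.aeval x a) = 0 →
      (p : MvPolynomial (Fin s) ℤ) ∣ a := fun p hp hpM a ha =>
    hM₁ p hp hpM a (Ideal.Quotient.eq_zero_iff_mem.1 ha)
  have hpN : ∀ p : ℕ, N + 1 ≤ p → ¬ p ∣ N := fun p hp h => by
    have := Nat.le_of_dvd hN0 h
    omega
  -- the number of variables is the dimension of the fibers
  have hsd : s = d := by
    obtain ⟨p, hpM, hp⟩ := Nat.exists_infinite_primes (max N₀ (max M₁ (N + 1)))
    simp only [max_le_iff] at hpM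
    have : Fact p.Prime := ⟨hp⟩
    have := hchar p hp hpM.1
    let _ : Algebra (ZMod p) (modPFiber R p) := ZMod.algebra _ p
    have h1 := ringKrullDim_fiber x (Ideal.Quotient.mk (Ideal.span {(p : R)}))
      Ideal.Quotient.mk_surjective ω hN (hpN p hpM.2.2) (hker p hp hpM.2.1)
    rw [hdim p hp hpM.1] at h1
    exact_mod_cast h1.symm
  subst hsd
  let h : ℕ := (Finset.univ.sup fun i => (f i).natDegree) + 1
  let m : ℕ := Finset.univ.sup fun i => c.degreeOf i
  refine ⟨(e * s * m * h ^ (s - 1) : ℕ) + 1, by positivity,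
    max (max M₁ (N + 1)) (max (max M₂ M₃) (Finset.univ.sup M₄)), ?_⟩
  intro p hp hpM hpN₀ n _
  simp only [max_le_iff] at hpM
  have : Fact p.Prime := ⟨hp⟩
  have := hchar p hp hpN₀
  let _ : Algebra (ZMod p) (modPFiber R p) := ZMod.algebra _ p
  have hgi : IsDomain (TensorProduct (ZMod p) (AlgebraicClosure (ZMod p)) (modPFiber R p)) :=
    hgeom p hp hpN₀
  have hdom : IsDomain (modPFiber R p) :=
    Function.Injective.isDomain (Algebra.TensorProduct.includeRight :
        modPFiber R p →ₐ[ZMod p] TensorProduct (ZMod p) (AlgebraicClosure (ZMod p)) (modPFiber R p))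
      (Algebra.TensorProduct.includeRight_injective
        (algebraMap (ZMod p) (AlgebraicClosure (ZMod p))).injective)
  refine abs_div_pow_sub_div_pow_le (by exact_mod_cast hp.one_le) (Nat.cast_nonneg _) hd ?_
  have key := abs_finrank_frobeniusPower_fiber_sub_le x (Ideal.Quotient.mk (Ideal.span {(p : R)}))
    (by omega) Ideal.Quotient.mk_surjective ω hN (hpN p hpM.1.2) (hker p hp hpM.1.1)
    (h := h) (m := m) (Nat.succ_pos _) f
    (fun i => hM₄ i p hp ((Finset.le_sup (f := M₄) (Finset.mem_univ i)).trans hpM.2.2))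
    (fun i => (Finset.le_sup (f := fun i => (f i).natDegree) (Finset.mem_univ i)).trans
      (Nat.le_succ _))
    I hfI c c₂ (hM₂ p hp hpM.2.1.1) (hM₃ p hp hpM.2.1.2)
    (fun i => Finset.le_sup (f := fun i => c.degreeOf i) (Finset.mem_univ i)) θ F V P hF hV hP
    (p ^ n) (pow_pos hp.pos n)
  rw [← pow_succ] at key
  push_cast at key ⊢
  exact key
end

section
/- Let R be a standard graded ring of dimension d ≥ 2 and characteristic p > 0, and I ⊂ R a graded ideal of finite colength. Let n_0 ≥ 1 be an integer with R_{n_0} ⊆ I and let μ ≥ μ(I) be at least the number of generators of I. Then each truncated Hilbert–Kunz density function f_n: [1, ∞) → [0, ∞) is compactly supported, and the union of supports ∪_{n≥1} supp(f_n) is contained in [1, n_0·μ]. -/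
/-- The length (= `k`-vector space dimension) of the degree-`m` graded piece of
`R ⧸ I`. -/
noncomputable def gradedPieceLength {k R : Type*} [Field k] [CommRing R] [Algebra k R]
    (𝒜 : ℕ → Submodule k R) (I : Ideal R) (m : ℕ) : ℕ :=
  Module.finrank k ((𝒜 m).map (Ideal.Quotient.mkₐ k I).toLinearMap)

/-- The `n`-th truncated Hilbert–Kunz density function of the pair `(R, I)`:
`f_n(x) = (1/q^(d−1)) · ℓ((R/I^{[q]})_⌊xq⌋)` with `q = p^n`. -/
noncomputable def truncHKDensity {k R : Type*} [Field k] [CommRing R] [Algebra k R]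
    (𝒜 : ℕ → Submodule k R) (I : Ideal R) (p d n : ℕ) (x : ℝ) : ℝ :=
  (gradedPieceLength 𝒜 (I.frobeniusPower (p ^ n)) ⌊x * (p : ℝ) ^ n⌋₊ : ℝ) /
    ((p : ℝ) ^ n) ^ (d - 1)

/-- In an algebra generated in degree one, the degree-`m` component of any element is a sum of
products of `m` elements of degree one. -/
lemma decompose_mem_pow_of_adjoin {k R : Type*} [Field k] [CommRing R] [Algebra k R]
    (𝒜 : ℕ → Submodule k R) [GradedAlgebra 𝒜]
    (hgen : Algebra.adjoin k (𝒜 1 : Set R) = ⊤) (x : R) :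
    ∀ m, (DirectSum.decompose 𝒜 x m : R) ∈ (𝒜 1) ^ m := by
  have hx : x ∈ Algebra.adjoin k (𝒜 1 : Set R) := by rw [hgen]; trivial
  induction hx using Algebra.adjoin_induction with
  | mem x hx =>
    intro m
    by_cases h : m = 1
    · subst h
      rw [DirectSum.decompose_of_mem_same 𝒜 hx, pow_one]
      exact hx
    · rw [DirectSum.decompose_of_mem_ne 𝒜 hx (Ne.symm h)]
      exact zero_mem _
  | algebraMap r =>
    intro m
    have hr : algebraMap k R r ∈ 𝒜 0 := SetLike.algebraMap_mem_graded 𝒜 r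
    by_cases h : m = 0
    · subst h
      rw [DirectSum.decompose_of_mem_same 𝒜 hr, pow_zero]
      exact Submodule.algebraMap_mem r
    · rw [DirectSum.decompose_of_mem_ne 𝒜 hr (Ne.symm h)]
      exact zero_mem _
  | add x y _ _ hx hy =>
    intro m
    rw [DirectSum.decompose_add, DirectSum.add_apply, Submodule.coe_add]
    exact add_mem (hx m) (hy m)
  | mul x y _ _ hx hy =>
    classical
    intro m
    rw [DirectSum.decompose_mul, DirectSum.coe_mul_apply]
    refine sum_mem fun ij hij => ?_
    have hm : ij.1 + ij.2 = m := (Finset.mem_filter.mp hij).2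
    rw [← hm, pow_add]
    exact Submodule.mul_mem_mul (hx _) (hy _)

lemma Submodule.pow_le_restrictScalars_pow {k R : Type*} [Field k] [CommRing R] [Algebra k R]
    (M : Submodule k R) (I : Ideal R) (h : ∀ x ∈ M, x ∈ I) (j : ℕ) :
    ∀ x ∈ M ^ j, x ∈ I ^ j := by
  induction j with
  | zero => intro x _; simp
  | succ j ih =>
    intro x hx
    rw [pow_succ] at hx ⊢
    induction hx using Submodule.mul_induction_on' with
    | mem_mul_mem a ha b hb => exact Ideal.mul_mem_mul (ih a ha) (h b hb)
    | add a _ b _ ha hb => exact add_mem ha hb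

lemma graded_piece_le_pow {k R : Type*} [Field k] [CommRing R] [Algebra k R]
    (𝒜 : ℕ → Submodule k R) [GradedAlgebra 𝒜]
    (hgen : Algebra.adjoin k (𝒜 1 : Set R) = ⊤) (I : Ideal R) (n₀ : ℕ)
    (hn₀I : (𝒜 n₀ : Set R) ⊆ (I : Set R)) (j m : ℕ) (hm : n₀ * j ≤ m) :
    ∀ x ∈ 𝒜 m, x ∈ I ^ j := by
  intro x hx
  have h1 : x ∈ (𝒜 1) ^ m := by
    have := decompose_mem_pow_of_adjoin 𝒜 hgen x m
    rwa [DirectSum.decompose_of_mem_same 𝒜 hx] at this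
  have hI : ∀ y ∈ (𝒜 1) ^ n₀, y ∈ I := by
    intro y hy
    refine hn₀I ?_
    have hle : ∀ i : ℕ, (𝒜 1) ^ i ≤ 𝒜 i := by
      intro i
      induction i with
      | zero =>
        rw [pow_zero, Submodule.one_le]
        exact SetLike.one_mem_graded 𝒜
      | succ i ih =>
        rw [pow_succ, Submodule.mul_le]
        exact fun a ha b hb => SetLike.mul_mem_graded (ih ha) hb
    exact hle n₀ hy
  obtain ⟨r, rfl⟩ := Nat.exists_eq_add_of_le hm
  clear hx
  rw [pow_add, pow_mul] at h1
  induction h1 using Submodule.mul_induction_on' with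
  | mem_mul_mem a ha b hb =>
    exact Ideal.mul_mem_right _ _ (Submodule.pow_le_restrictScalars_pow _ I hI j a ha)
  | add a _ b _ ha hb => exact add_mem ha hb

/-- The pigeonhole step: a product of `μ * q` elements of an ideal with `μ ≥ 1` generators
lies in the Frobenius power. -/
lemma pow_le_frobeniusPower {R : Type*} [CommRing R] (I : Ideal R) (q μ : ℕ) (hμ : 0 < μ)
    (g : Fin μ → R) (hg : Ideal.span (Set.range g) = I) :
    I ^ (μ * q) ≤ I.frobeniusPower q := by
  have hone : ∀ i, Ideal.span {g i} ^ q ≤ I.frobeniusPower q := by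
    intro i
    rw [Ideal.span_singleton_pow, Ideal.span_singleton_le_iff_mem]
    refine Ideal.subset_span ⟨g i, ?_, rfl⟩
    rw [← hg]
    exact Ideal.subset_span ⟨i, rfl⟩
  have key : ∀ s : Finset (Fin μ), s.Nonempty →
      (s.sup fun i => Ideal.span {g i}) ^ (s.card * q) ≤ I.frobeniusPower q := by
    intro s hs
    induction hs using Finset.Nonempty.cons_induction with
    | singleton a => simpa using hone a
    | cons a s ha _ ih =>
      rw [Finset.sup_cons, Finset.card_cons, add_mul, one_mul, add_comm]
      exact Ideal.sup_pow_add_le_pow_sup_pow.trans (sup_le (hone a) ih)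
  have hne : (Finset.univ : Finset (Fin μ)).Nonempty := ⟨⟨0, hμ⟩, Finset.mem_univ _⟩
  have hsup : (Finset.univ.sup fun i => Ideal.span {g i}) = I := by
    rw [Finset.sup_univ_eq_iSup, ← hg, ← Set.iUnion_singleton_eq_range, Ideal.span_iUnion]
  simpa [hsup] using key _ hne

theorem truncHKDensity_support_subset
    {k R : Type*} [Field k] [CommRing R] [Algebra k R]
    (𝒜 : ℕ → Submodule k R) [GradedAlgebra 𝒜]
    -- `R` is standard graded: `R₀ = k` and `R` is generated over `k` in degree 1
    (h0 : 𝒜 0 = Submodule.span k {1})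
    (hgen : Algebra.adjoin k (𝒜 1 : Set R) = ⊤)
    (d : ℕ) (hd : 2 ≤ d) (hdim : ringKrullDim R = d)
    (p : ℕ) (hp : p.Prime) [CharP R p]
    (I : Ideal R) (hIhom : I.IsHomogeneous 𝒜)
    (hIfin : FiniteDimensional k (R ⧸ I))
    -- `n₀ ≥ 1` is such that `R_{n₀} ⊆ I`
    (n₀ : ℕ) (hn₀ : 1 ≤ n₀) (hn₀I : (𝒜 n₀ : Set R) ⊆ (I : Set R))
    -- `μ` is at least the number of generators of `I`
    (μ : ℕ) (g : Fin μ → R) (hg : Ideal.span (Set.range g) = I) :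
    ∀ n : ℕ, 1 ≤ n →
      {x : ℝ | 1 ≤ x ∧ truncHKDensity 𝒜 I p d n x ≠ 0} ⊆
        Set.Icc (1 : ℝ) (n₀ * μ) := by
  intro n _ x hx
  obtain ⟨hx1, hx2⟩ := hx
  refine ⟨hx1, ?_⟩
  by_contra! hlt
  apply hx2
  have hμ : 0 < μ := by
    rcases Nat.eq_zero_or_pos μ with h | h
    · exfalso
      subst h
      have hI : I = ⊥ := by rw [← hg, Set.range_eq_empty, Ideal.span_empty]
      subst hI
      have hfin : FiniteDimensional k R :=
        Module.Finite.equiv (AlgEquiv.quotientBot k R).toLinearEquiv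
      have : IsArtinianRing R := IsArtinianRing.of_finite k R
      have hle : ringKrullDim R ≤ 0 :=
        Ring.krullDimLE_iff.mp (isArtinianRing_iff_krullDimLE_zero.mp this)
      rw [hdim] at hle
      have : d ≤ 0 := by exact_mod_cast hle
      omega
    · exact h
  have hm : n₀ * (μ * p ^ n) ≤ ⌊x * (p : ℝ) ^ n⌋₊ := by
    apply Nat.le_floor
    push_cast
    rw [← mul_assoc]
    exact mul_le_mul_of_nonneg_right hlt.le (by positivity)
  have hbot : (𝒜 ⌊x * (p : ℝ) ^ n⌋₊).map
      (Ideal.Quotient.mkₐ k (I.frobeniusPower (p ^ n))).toLinearMap = ⊥ := by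
    rw [eq_bot_iff, Submodule.map_le_iff_le_comap]
    intro y hy
    rw [Submodule.mem_comap, Submodule.mem_bot]
    exact Ideal.Quotient.eq_zero_iff_mem.mpr (pow_le_frobeniusPower I (p ^ n) μ hμ g hg
      (graded_piece_le_pow 𝒜 hgen I n₀ hn₀I _ _ hm y hy))
  rw [truncHKDensity, gradedPieceLength, hbot]
  simp
end

section
/- Let R be a standard graded domain of dimension d ≥ 2 over an algebraically closed field of characteristic p > 0 and let I ⊂ R be a homogeneous ideal of finite colength such that I contains a nonzero element of degree 1 (i.e., I ∩ R_1 ≠ 0). Then for every x > 1 the Hilbert–Kunz density function satisfies the strict inequality f(R, I)(x) < F_R(x), where F_R(x) = e_0(R, m)·x^{d−1}/(d−1)! is the Hilbert–Samuel density function of R. -/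
/-!
Write `q = p ^ n` and `m = ⌊xq⌋`, so `m ≥ q` since `x > 1`. As `y ^ q ∈ I^{[q]}` and `R` is a domain,
multiplication by `y ^ q` embeds `R_{m-q}` into the kernel of `R_m → R ⧸ I^{[q]}`, hence
`ℓ((R ⧸ I^{[q]})_m) + ℓ(R_{m-q}) ≤ ℓ(R_m)` (`gradedPieceLength_add_finrank_le`).

It remains to bound `ℓ(R_{m-q})` from below by a positive multiple of `q ^ (d - 1)`. By Noether
normalization and incomparability the transcendence degree of `R` over `k` is at least `d`; since
`R₁` generates `R`, there are `d` algebraically independent linear forms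
(`exists_algebraicIndependent_degree_one`), and counting monomials in them gives
`ℓ(R_j) ≥ (j + 1) ^ (d - 1) / (d - 1)!` (`pow_div_factorial_le_finrank`). With `j = m - q` one has
`j + 1 ≥ (x - 1) q`, so the two truncated densities differ by at least the constant
`(x - 1) ^ (d - 1) / (d - 1)! > 0` for every `n`, and so do their limits.
-/

open Filter

/-- The `n`-th truncated Hilbert–Samuel density function of `R`:
`F_n(x) = (1/q^{d−1}) ℓ(R_{⌊xq⌋})` with `q = p^n`; its limit is
`F_R(x) = e₀(R,𝐦) x^{d−1}/(d−1)!`. -/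
noncomputable def truncHSDensity {k R : Type*} [Field k] [CommRing R] [Algebra k R]
    (𝒜 : ℕ → Submodule k R) (p d n : ℕ) (x : ℝ) : ℝ :=
  (Module.finrank k (𝒜 ⌊x * (p : ℝ) ^ n⌋₊) : ℝ) / ((p : ℝ) ^ n) ^ (d - 1)

/-- Incomparability: along an integral ring map, contraction of primes is strictly monotone, so the
dimension of the target is at most that of the source. -/
theorem ringKrullDim_le_of_isIntegral {S R : Type*} [CommRing S] [CommRing R] (f : S →+* R)
    (hf : f.IsIntegral) : ringKrullDim R ≤ ringKrullDim S := by
  algebraize [f]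
  have : Algebra.IsIntegral S R := ⟨hf⟩
  refine Order.krullDim_le_of_strictMono (PrimeSpectrum.comap f) fun P Q h => ?_
  exact Ideal.IsIntegral.comap_lt_comap (R := S) (A := R) h

section HilbertFunction

variable {k R : Type*} [Field k] [CommRing R] [Algebra k R]
  (𝒜 : ℕ → Submodule k R) [GradedAlgebra 𝒜]

/-- The ideal generated by the linear forms is generated by finitely many of them; as `R₀ = k`,
these span `R₁` over `k`. -/
theorem fg_degree_one [IsNoetherianRing R] (h0 : 𝒜 0 = Submodule.span k {1}) :
    (𝒜 1).FG := by
  classical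
  obtain ⟨T, hT, hspan⟩ := (Submodule.fg_span_iff_fg_span_finset_subset (𝒜 1 : Set R)).1
    (IsNoetherian.noetherian (Submodule.span R (𝒜 1 : Set R)))
  refine ⟨T, le_antisymm (Submodule.span_le.2 hT) fun a ha => ?_⟩
  have haT : a ∈ Submodule.span R (T : Set R) := hspan ▸ Submodule.subset_span ha
  obtain ⟨f, -, hf⟩ := Submodule.mem_span_finset.1 haT
  -- comparing degree-one components replaces the coefficients by their degree-zero parts
  have h1 : a = ∑ t ∈ T, (DirectSum.decompose 𝒜 (f t) 0 : R) * t := by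
    conv_lhs => rw [← DirectSum.decompose_of_mem_same 𝒜 ha, ← hf]
    rw [DirectSum.decompose_sum, DFinsupp.finsetSum_apply, AddSubmonoidClass.coe_finsetSum]
    refine Finset.sum_congr rfl fun t ht => ?_
    rw [smul_eq_mul, DirectSum.coe_decompose_mul_of_right_mem 𝒜 1 (hT ht)]
    simp
  rw [h1]
  refine Submodule.sum_mem _ fun t ht => ?_
  have h2 : (DirectSum.decompose 𝒜 (f t) 0 : R) ∈ Submodule.span k {(1 : R)} :=
    h0 ▸ SetLike.coe_mem _
  obtain ⟨c, hc⟩ := Submodule.mem_span_singleton.1 h2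
  rw [← hc, smul_mul_assoc, one_mul]
  exact Submodule.smul_mem _ _ (Submodule.subset_span ht)

theorem le_pow_degree_one (hgen : Algebra.adjoin k (𝒜 1 : Set R) = ⊤) (m : ℕ) :
    𝒜 m ≤ 𝒜 1 ^ m := by
  classical
  -- `R` is spanned by products of linear forms; such a product is homogeneous, so its degree-`m`
  -- component is either itself (a product of `m` linear forms) or zero
  have key : ∀ r : R, (DirectSum.decompose 𝒜 r m : R) ∈ 𝒜 1 ^ m := by
    intro r
    have hr : r ∈ Submodule.span k (Submonoid.closure (𝒜 1 : Set R) : Set R) := by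
      rw [← Algebra.adjoin_eq_span, hgen]; trivial
    induction hr using Submodule.span_induction with
    | zero => simp
    | add x y _ _ hx hy => simpa using add_mem hx hy
    | smul c x _ hx =>
      rw [DirectSum.decompose_smul]
      exact Submodule.smul_mem _ c hx
    | mem x hx =>
      have hx' : ∃ j, x ∈ 𝒜 1 ^ j ∧ x ∈ 𝒜 j := by
        induction hx using Submonoid.closure_induction with
        | mem x hx => exact ⟨1, by simpa using hx, hx⟩
        | one => exact ⟨0, by rw [pow_zero]; exact Submodule.one_le.1 le_rfl, SetLike.one_mem_graded 𝒜⟩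
        | mul x y _ _ hx hy =>
          obtain ⟨i, hi, hi'⟩ := hx
          obtain ⟨j, hj, hj'⟩ := hy
          exact ⟨i + j, pow_add (𝒜 1) i j ▸ Submodule.mul_mem_mul hi hj,
            SetLike.mul_mem_graded hi' hj'⟩
      obtain ⟨j, hj, hj'⟩ := hx'
      by_cases hjm : j = m
      · subst hjm
        rwa [DirectSum.decompose_of_mem_same 𝒜 hj']
      · rw [DirectSum.decompose_of_mem_ne 𝒜 hj' hjm]
        exact zero_mem _
  intro a ha
  rw [← DirectSum.decompose_of_mem_same 𝒜 ha]
  exact key a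

theorem finiteDimensional_piece [IsNoetherianRing R] (h0 : 𝒜 0 = Submodule.span k {1})
    (hgen : Algebra.adjoin k (𝒜 1 : Set R) = ⊤) (m : ℕ) : FiniteDimensional k (𝒜 m) := by
  have : FiniteDimensional k ↥(𝒜 1 ^ m) :=
    Module.Finite.iff_fg.2 ((fg_degree_one 𝒜 h0).pow m)
  exact Submodule.finiteDimensional_of_le (le_pow_degree_one 𝒜 hgen m)

/-- By Noether normalization `R` has transcendence degree at least `d` over `k`, and since `R` is
generated by `R₁` a transcendence basis can be chosen among the linear forms. -/
theorem exists_algebraicIndependent_degree_one [IsDomain R] [IsNoetherianRing R]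
    (h0 : 𝒜 0 = Submodule.span k {1}) (hgen : Algebra.adjoin k (𝒜 1 : Set R) = ⊤)
    {d : ℕ} (hdim : ringKrullDim R = d) :
    ∃ z : Fin d → R, (∀ i, z i ∈ 𝒜 1) ∧ AlgebraicIndependent k z := by
  obtain ⟨T, hT⟩ := fg_degree_one 𝒜 h0
  have : Algebra.FiniteType k R := ⟨⟨T, by
    rw [← Algebra.adjoin_span, hT, hgen]⟩⟩
  obtain ⟨s, g, hinj, hint⟩ := exists_integral_inj_algHom_of_fg k R
  have hds : d ≤ s := by
    have h := ringKrullDim_le_of_isIntegral g.toRingHom hint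
    rw [hdim, MvPolynomial.ringKrullDim_of_isNoetherianRing, ringKrullDim_eq_zero_of_field] at h
    simpa using h
  have hw : AlgebraicIndependent k (fun i : Fin s => g (MvPolynomial.X i)) := by
    have : MvPolynomial.aeval (fun i : Fin s => g (MvPolynomial.X i)) = g := by
      ext i; simp
    rw [AlgebraicIndependent, this]
    exact hinj
  have : Algebra.IsAlgebraic (Algebra.adjoin k (𝒜 1 : Set R)) R := by
    refine ⟨fun r => ?_⟩
    exact isAlgebraic_algebraMap (⟨r, hgen ▸ trivial⟩ : Algebra.adjoin k (𝒜 1 : Set R))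
  obtain ⟨t, ht, htb⟩ := exists_isTranscendenceBasis_subset (R := k) (𝒜 1 : Set R)
  have hcard := hw.lift_cardinalMk_le_trdeg
  rw [← htb.cardinalMk_eq_trdeg] at hcard
  obtain ⟨e⟩ := Cardinal.lift_mk_le'.1 hcard
  exact ⟨fun i => (e (Fin.castLE hds i) : R), fun i => ht (e _).2,
    htb.1.comp _ (e.injective.comp (Fin.castLE_injective hds))⟩

/-- The degree-`j` monomials in `d` algebraically independent linear forms are linearly independent
in `R_j`, and there are `(d + j - 1).choose (d - 1)` of them. -/
theorem pow_div_factorial_le_finrank [IsDomain R] [IsNoetherianRing R]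
    (h0 : 𝒜 0 = Submodule.span k {1}) (hgen : Algebra.adjoin k (𝒜 1 : Set R) = ⊤)
    {d : ℕ} (hd : 1 ≤ d) (hdim : ringKrullDim R = d) (j : ℕ) :
    ((j : ℝ) + 1) ^ (d - 1) / (d - 1).factorial ≤ Module.finrank k (𝒜 j) := by
  classical
  obtain ⟨z, hz, hind⟩ := exists_algebraicIndependent_degree_one 𝒜 h0 hgen hdim
  have := finiteDimensional_piece 𝒜 h0 hgen j
  let A := (Finset.univ : Finset (Fin d)).finsuppAntidiag j
  have hmem : ∀ a ∈ A, MvPolynomial.aeval z (MvPolynomial.monomial a (1 : k)) ∈ 𝒜 j := by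
    intro a ha
    have hsum := (Finset.mem_finsuppAntidiag.1 ha).1
    rw [MvPolynomial.aeval_monomial, map_one, one_mul, Finsupp.prod_fintype _ _ (by simp)]
    have := SetLike.prod_pow_mem_graded 𝒜 (fun _ => 1) z a (F := Finset.univ) (fun i _ => hz i)
    simpa [hsum] using this
  have hli : LinearIndependent k
      (fun a : A => (⟨_, hmem a a.2⟩ : 𝒜 j)) := by
    apply LinearIndependent.of_comp (𝒜 j).subtype
    have h1 := (MvPolynomial.basisMonomials (Fin d) k).linearIndependent.map'
      (MvPolynomial.aeval z).toLinearMap (LinearMap.ker_eq_bot.2 hind)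
    have h2 := h1.comp (fun a : A => (a : Fin d →₀ ℕ)) Subtype.val_injective
    have h3 : ((MvPolynomial.aeval z).toLinearMap ∘ MvPolynomial.basisMonomials (Fin d) k) ∘
        (fun a : A => (a : Fin d →₀ ℕ)) =
        (𝒜 j).subtype ∘ fun a : A => (⟨_, hmem a a.2⟩ : 𝒜 j) := by
      ext a
      simp
    rwa [h3] at h2
  have hcard := hli.fintype_card_le_finrank
  rw [Fintype.card_coe, Finset.card_finsuppAntidiag_nat_eq_choose, Finset.card_univ,
    Fintype.card_fin] at hcard
  have hch : (d + j - 1).choose j = (d + j - 1).choose (d - 1) :=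
    Nat.choose_symm_of_eq_add (by omega)
  have hpow := Nat.pow_le_choose (α := ℝ) (d - 1) (d + j - 1)
  have he : d + j - 1 + 1 - (d - 1) = j + 1 := by omega
  rw [he, ← hch] at hpow
  push_cast at hpow
  exact hpow.trans (by exact_mod_cast hcard)

/-- Multiplication by `y ^ q` embeds `R_{m-q}` into the degree-`m` part of `I^{[q]}`, that is, into
the kernel of `R_m → R ⧸ I^{[q]}`. -/
theorem gradedPieceLength_add_finrank_le [IsDomain R] [IsNoetherianRing R]
    (h0 : 𝒜 0 = Submodule.span k {1}) (hgen : Algebra.adjoin k (𝒜 1 : Set R) = ⊤)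
    (I : Ideal R) {y : R} (hy1 : y ∈ 𝒜 1) (hyI : y ∈ I) (hy0 : y ≠ 0) {q m : ℕ} (hqm : q ≤ m) :
    gradedPieceLength 𝒜 (I.frobeniusPower q) m + Module.finrank k (𝒜 (m - q)) ≤
      Module.finrank k (𝒜 m) := by
  have := finiteDimensional_piece 𝒜 h0 hgen m
  let π := (Ideal.Quotient.mkₐ k (I.frobeniusPower q)).toLinearMap.comp (𝒜 m).subtype
  have hyq : y ^ q ∈ 𝒜 q := by simpa using SetLike.pow_mem_graded q hy1
  have hmul : ∀ r ∈ 𝒜 (m - q), y ^ q * r ∈ 𝒜 m := fun r hr => by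
    have := SetLike.mul_mem_graded hyq hr
    rwa [show q + (m - q) = m by omega] at this
  let μ : 𝒜 (m - q) →ₗ[k] LinearMap.ker π :=
    { toFun := fun r => ⟨⟨y ^ q * r, hmul r r.2⟩, by
        change Ideal.Quotient.mk _ (y ^ q * (r : R)) = 0
        exact Ideal.Quotient.eq_zero_iff_mem.2
          (Ideal.mul_mem_right _ _ (Ideal.subset_span ⟨y, hyI, rfl⟩))⟩
      map_add' := fun a b => by ext; simp [mul_add]
      map_smul' := fun c a => by ext; simp }
  have hμ : Function.Injective μ := fun a b hab => by
    have h : y ^ q * (a : R) = y ^ q * b :=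
      congrArg (fun u : LinearMap.ker π => ((u : 𝒜 m) : R)) hab
    exact Subtype.ext (mul_left_cancel₀ (pow_ne_zero q hy0) h)
  have h1 := LinearMap.finrank_le_finrank_of_injective hμ
  have h2 := LinearMap.finrank_range_add_finrank_ker π
  have h3 : LinearMap.range π =
      (𝒜 m).map (Ideal.Quotient.mkₐ k (I.frobeniusPower q)).toLinearMap := by
    rw [LinearMap.range_comp, Submodule.range_subtype]
  rw [h3] at h2
  rw [gradedPieceLength]
  omega

end HilbertFunction

theorem hkDensity_lt_hsDensity_of_degree_one_element
    {k R : Type*} [Field k] [IsAlgClosed k] [CommRing R] [IsDomain R]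
    [IsNoetherianRing R] [Algebra k R]
    (𝒜 : ℕ → Submodule k R) [GradedAlgebra 𝒜]
    -- `R` is standard graded: `R₀ = k` and `R` is generated over `k` in degree 1
    (h0 : 𝒜 0 = Submodule.span k {1})
    (hgen : Algebra.adjoin k (𝒜 1 : Set R) = ⊤)
    (d : ℕ) (hd : 2 ≤ d) (hdim : ringKrullDim R = d)
    (p : ℕ) (hp : p.Prime) [CharP R p]
    (I : Ideal R) (hIhom : I.IsHomogeneous 𝒜) (hIne : I ≠ ⊤)
    (hIfin : FiniteDimensional k (R ⧸ I))
    -- `I` contains a nonzero element of degree one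
    (y : R) (hy1 : y ∈ 𝒜 1) (hyI : y ∈ I) (hy0 : y ≠ 0) :
    ∀ x : ℝ, 1 < x → ∀ fx Fx : ℝ,
      Tendsto (fun n => truncHKDensity 𝒜 I p d n x) atTop (nhds fx) →
      Tendsto (fun n => truncHSDensity 𝒜 p d n x) atTop (nhds Fx) →
      fx < Fx := by
  intro x hx fx Fx hf hF
  have hpos : (0 : ℝ) < (x - 1) ^ (d - 1) / (d - 1).factorial :=
    div_pos (pow_pos (sub_pos.2 hx) _) (by exact_mod_cast Nat.factorial_pos _)
  have key : ∀ n, truncHKDensity 𝒜 I p d n x + (x - 1) ^ (d - 1) / (d - 1).factorial ≤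
      truncHSDensity 𝒜 p d n x := by
    intro n
    have hq : (0 : ℝ) < (p : ℝ) ^ n := pow_pos (by exact_mod_cast hp.pos) n
    set m := ⌊x * (p : ℝ) ^ n⌋₊ with hm
    have hqm : p ^ n ≤ m := by
      apply Nat.le_floor
      push_cast
      nlinarith
    have hlt : x * (p : ℝ) ^ n < m + 1 := Nat.lt_floor_add_one _
    have hlen := gradedPieceLength_add_finrank_le 𝒜 h0 hgen I hy1 hyI hy0 hqm
    have hlow := pow_div_factorial_le_finrank 𝒜 h0 hgen (by omega) hdim (m - p ^ n)
    have hpw : ((x - 1) * (p : ℝ) ^ n) ^ (d - 1) ≤ (((m - p ^ n : ℕ) : ℝ) + 1) ^ (d - 1) := by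
      apply pow_le_pow_left₀ (mul_nonneg (sub_pos.2 hx).le hq.le)
      rw [Nat.cast_sub hqm]
      push_cast
      linarith
    have hlen' : (gradedPieceLength 𝒜 (I.frobeniusPower (p ^ n)) m : ℝ) +
        Module.finrank k (𝒜 (m - p ^ n)) ≤ Module.finrank k (𝒜 m) := by exact_mod_cast hlen
    have hfac : (0 : ℝ) < (d - 1).factorial := by exact_mod_cast Nat.factorial_pos _
    have hlow' := (div_le_div_of_nonneg_right hpw hfac.le).trans hlow
    rw [mul_pow, mul_div_right_comm] at hlow'
    rw [truncHKDensity, truncHSDensity, ← hm, le_div_iff₀ (pow_pos hq _), add_mul,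
      div_mul_cancel₀ _ (pow_pos hq _).ne']
    linarith
  have := le_of_tendsto_of_tendsto' (hf.add_const _) hF key
  linarith
end
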